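/- arXiv:2308.05066 — 2 statements merged into one kernel-verified Lean document; each statement's English description precedes it below -/
import Mathlib

section
/- Let k be a field of characteristic 0 and B an affine k-domain graded over k by a finitely generated abelian group G. Then: (a) 𝒳(B) = ⋃_{H ∈ ℳ(B)} 𝕋_H(B); (b) if B is normal, then every element H of ℳ(B) satisfies 𝔾̄(B) ⊆ H. -/
noncomputable section

/-- A derivation is locally nilpotent. -/
def IsLND {R : Type*} [CommRing R] (D : Derivation ℤ R R) : Prop :=
  ∀ b : R, ∃ n : ℕ, 0 < n ∧ (⇑D)^[n] b = 0

/-- Kernel of a derivation, as a subring. -/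
def kerDer {R : Type*} [CommRing R] (D : Derivation ℤ R R) : Subring R where
  carrier := {x | D x = 0}
  one_mem' := by simp
  mul_mem' := by
    intro a b ha hb
    simp only [Set.mem_setOf_eq] at *
    rw [Derivation.leibniz, ha, hb]
    simp
  add_mem' := by
    intro a b ha hb
    simp only [Set.mem_setOf_eq] at *
    rw [map_add, ha, hb, add_zero]
  zero_mem' := by simp
  neg_mem' := by
    intro a ha
    simp only [Set.mem_setOf_eq] at *
    rw [map_neg, ha, neg_zero]

section Graded

variable {G : Type*} [AddCommGroup G] {B : Type*} [CommRing B]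

/-- The Veronese subring `B^{(H)} = ⊕_{i ∈ H} B_i` of a `G`-graded ring,
realized as the subring generated by the homogeneous elements whose degree lies in `H`. -/
def verSub (𝒜 : G → AddSubgroup B) (H : AddSubgroup G) : Subring B :=
  Subring.closure (⋃ i ∈ (H : Set G), (𝒜 i : Set B))

/-- 𝔾(B): the subgroup of G generated by the degrees of nonzero homogeneous elements. -/
def Gsub (𝒜 : G → AddSubgroup B) : AddSubgroup G :=
  AddSubgroup.closure { i : G | 𝒜 i ≠ ⊥ }

/-- `H ∈ 𝕋(B)`: the quotient `𝔾(B)/(H ∩ 𝔾(B))` is torsion. -/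
def Tmem (𝒜 : G → AddSubgroup B) (H : AddSubgroup G) : Prop :=
  ∀ g ∈ Gsub 𝒜, ∃ n : ℕ, 0 < n ∧ n • g ∈ H

/-- A homogeneous derivation of `B`. -/
def IsHomogDer (𝒜 : G → AddSubgroup B) (D : Derivation ℤ B B) : Prop :=
  ∃ d : G, ∀ (i : G) (x : B), x ∈ 𝒜 i → D x ∈ 𝒜 (i + d)

/-- A homogeneous derivation of a graded subring `S` of `B`. -/
def IsHomogDerOn (𝒜 : G → AddSubgroup B) (S : Subring B) (D : Derivation ℤ S S) : Prop :=
  ∃ d : G, ∀ (i : G) (x : S), (x : B) ∈ 𝒜 i → ((D x : S) : B) ∈ 𝒜 (i + d)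

/-- 𝕄̄(B,p): the subgroup of G generated by the degrees i with B_i ⊄ p. -/
def Mbar (𝒜 : G → AddSubgroup B) (p : Ideal B) : AddSubgroup G :=
  AddSubgroup.closure { i : G | ¬ (𝒜 i : Set B) ⊆ (p : Set B) }

/-- A prime ideal of height 1. -/
def heightOne {R : Type*} [CommRing R] (p : Ideal R) : Prop :=
  p.IsPrime ∧ (∃ q : Ideal R, q.IsPrime ∧ q < p) ∧
    ∀ q r : Ideal R, q.IsPrime → r.IsPrime → q < r → r < p → False

open Classical in
/-- 𝔾̄(B). -/
def Gbar (𝒜 : G → AddSubgroup B) : AddSubgroup G :=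
  if ∃ p : Ideal B, heightOne p then ⨅ p : {p : Ideal B // heightOne p}, Mbar 𝒜 p.1
  else Gsub 𝒜

end Graded

/-- 𝒳(B): the set of H ∈ 𝕋(B) with HLND(B^{(H)}) ≠ {0}. -/
def Xset {G : Type*} [AddCommGroup G] {B : Type*} [CommRing B]
    (𝒜 : G → AddSubgroup B) : Set (AddSubgroup G) :=
  { H | Tmem 𝒜 H ∧ ∃ D : Derivation ℤ (verSub 𝒜 H) (verSub 𝒜 H),
      IsLND D ∧ IsHomogDerOn 𝒜 (verSub 𝒜 H) D ∧ D ≠ 0 }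

/-- ℳ(B): the set of maximal elements of the poset (𝒳(B), ⊆). -/
def Mset {G : Type*} [AddCommGroup G] {B : Type*} [CommRing B]
    (𝒜 : G → AddSubgroup B) : Set (AddSubgroup G) :=
  { H | H ∈ Xset 𝒜 ∧ ∀ H' ∈ Xset 𝒜, H ≤ H' → H' = H }

/-!
The set `𝒳(B)` is closed under passing to smaller members of `𝕋(B)` and, when `B` is normal, under
`H ↦ H + 𝔾̄(B)`. As `G` is Noetherian, every member of `𝒳(B)` lies below a maximal one, and a
maximal one absorbs `𝔾̄(B)`.

*Going down.* Let `D` be a nonzero homogeneous locally nilpotent derivation of `B^{(H)}`, of degree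
`d`, let `y` be homogeneous with `D y ≠ 0 = D (D y)`, and let `H' ⊆ H` be in `𝕋(B)`. Let `n` be the
order of `d` modulo the group generated by `H'` and the degrees of the homogeneous elements of
`ker D`. Over `Frac (ker D)`, an element of `B^{(H')}` is a polynomial in the slice `y / D y`, and
a comparison of degrees shows that only powers of `y ^ n` occur; so its derivative is divisible by
`y ^ (n - 1)`, up to a factor in `ker D` that can be chosen uniformly because `B^{(H')}` is
finitely generated. For a suitable homogeneous `w` in `ker D`, the derivation `(w / y ^ (n - 1)) D`
thus restricts to `B^{(H')}`.

*Going up.* A homogeneous locally nilpotent derivation `D` of `B^{(H)}` extends to `Frac B`. Let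
`c` be homogeneous of degree in `H + 𝔾̄(B)` and let `p` be a prime of height one. Some homogeneous
`u ∉ p` has `u * c` and a power `u ^ t` in `B^{(H)}`, so the Leibniz rule puts `D c` into the
localization `B_p`. By normality `D c ∈ B`, and the restriction of `D` to `B^{(H + 𝔾̄(B))}` is
locally nilpotent since that ring is integral over `B^{(H)}`.
-/

section Iterates

open Finset

lemma exists_pos_iterate_eq_zero {M : Type*} [Zero M] (f : M → M) (x : M) (rank : ℕ → ℕ)
    (h : ∀ j, f (f^[j] x) ≠ 0 → rank (j + 1) < rank j) : ∃ n, 0 < n ∧ f^[n] x = 0 := by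
  by_contra! hne
  refine not_strictAnti_of_wellFoundedLT rank (strictAnti_nat_of_succ_lt fun j => h j ?_)
  rw [← Function.iterate_succ_apply' f]
  exact hne _ j.succ_pos

variable {R A : Type*} [CommRing R] [CommRing A] [Algebra R A] (D : Derivation R A A)

lemma iterate_derivation_eq_zero_of_le {m n : ℕ} (h : m ≤ n) {x : A} (hx : D^[m] x = 0) :
    D^[n] x = 0 := by
  obtain ⟨r, rfl⟩ := Nat.exists_eq_add_of_le' h
  rw [Function.iterate_add_apply, hx, iterate_map_zero]

lemma iterate_derivation_mul (n : ℕ) (x y : A) :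
    D^[n] (x * y) =
      ∑ ij ∈ antidiagonal n, n.choose ij.1 • (D^[ij.1] x * D^[ij.2] y) := by
  induction n with
  | zero => simp
  | succ n ih =>
    rw [sum_antidiagonal_choose_succ_nsmul (fun i j => D^[i] x * D^[j] y) n,
      Function.iterate_succ_apply', ih, map_sum, ← sum_add_distrib]
    refine sum_congr rfl fun ij hij => ?_
    rw [n.choose_symm_of_eq_add (mem_antidiagonal.1 hij).symm, map_nsmul,
      Derivation.leibniz, ← nsmul_add, Function.iterate_succ_apply', Function.iterate_succ_apply',
      smul_eq_mul, smul_eq_mul, mul_comm (D^[ij.2] y)]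

lemma iterate_derivation_const_mul {c : A} (hc : D c = 0) (n : ℕ) (x : A) :
    D^[n] (c * x) = c * D^[n] x := by
  induction n with
  | zero => rfl
  | succ n ih => simp [Function.iterate_succ_apply', ih, hc]

lemma iterate_derivation_mul_of_iterate_succ_eq_zero {x y : A} {m n : ℕ}
    (hx : D^[m + 1] x = 0) (hy : D^[n + 1] y = 0) :
    D^[m + n] (x * y) = (m + n).choose m • (D^[m] x * D^[n] y) := by
  rw [iterate_derivation_mul]
  refine sum_eq_single_of_mem (m, n) (mem_antidiagonal.2 rfl) ?_
  rintro ⟨i, j⟩ hij hne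
  rw [HasAntidiagonal.mem_antidiagonal] at hij
  rcases lt_trichotomy i m with him | rfl | him
  · simp [iterate_derivation_eq_zero_of_le D (show n + 1 ≤ j by omega) hy]
  · exact absurd (by simp; omega) hne
  · simp [iterate_derivation_eq_zero_of_le D him hx]

lemma iterate_derivation_mul_eq_zero {x y : A} {m n : ℕ}
    (hx : D^[m + 1] x = 0) (hy : D^[n + 1] y = 0) : D^[m + n + 1] (x * y) = 0 := by
  rw [Function.iterate_succ_apply', iterate_derivation_mul_of_iterate_succ_eq_zero D hx hy,
    map_nsmul, Derivation.leibniz, ← Function.iterate_succ_apply' D,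
    ← Function.iterate_succ_apply' D, hx, hy, smul_zero, smul_zero, add_zero, smul_zero]

lemma iterate_derivation_pow {y : A} (hy : D (D y) = 0) (m : ℕ) :
    D^[m] (y ^ m) = (m.factorial : A) * D y ^ m ∧ D^[m + 1] (y ^ m) = 0 := by
  induction m with
  | zero => simp
  | succ m ih =>
    refine ⟨?_, pow_succ y m ▸ iterate_derivation_mul_eq_zero D ih.2 (n := 1) hy⟩
    rw [pow_succ, iterate_derivation_mul_of_iterate_succ_eq_zero D ih.2 (n := 1) hy, ih.1,
      Nat.choose_succ_self_right, Nat.factorial_succ, nsmul_eq_mul]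
    push_cast [Function.iterate_one]
    ring

-- Subtracting the leading term of `x`, viewed as a polynomial in the slice `y / D y`.
lemma iterate_derivation_sub_leading_term {x y : A} {m : ℕ} (hx : D^[m + 1] x = 0)
    (hy : D (D y) = 0) :
    D^[m] ((m.factorial : A) * D y ^ m * x - D^[m] x * y ^ m) = 0 := by
  rw [iterate_map_sub, iterate_derivation_const_mul D (by simp [Derivation.leibniz_pow, hy]),
    iterate_derivation_const_mul D ((Function.iterate_succ_apply' D m x).symm.trans hx),
    (iterate_derivation_pow D hy m).1, mul_comm (D^[m] x), sub_self]

lemma pow_dvd_mul_derivation_of_sub_leading_term {x y r : A} {m n : ℕ} (hnm : n ≤ m - 1)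
    (hx : D^[m + 1] x = 0) (hy : D (D y) = 0)
    (h : y ^ n ∣ r * D ((m.factorial : A) * D y ^ m * x - D^[m] x * y ^ m)) :
    y ^ n ∣ r * ((m.factorial : A) * D y ^ m) * D x := by
  have hDw : D (D^[m] x) = 0 := (Function.iterate_succ_apply' D m x).symm.trans hx
  have hD : D ((m.factorial : A) * D y ^ m * x - D^[m] x * y ^ m) =
      (m.factorial : A) * D y ^ m * D x - D^[m] x * (m * (y ^ (m - 1) * D y)) := by
    simp [Derivation.leibniz_pow, hy, hDw]
  have hlead : y ^ n ∣ r * D^[m] x * m * D y * y ^ (m - 1) :=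
    dvd_mul_of_dvd_right (pow_dvd_pow y hnm) _
  rw [hD] at h
  convert dvd_add h hlead using 1
  ring

end Iterates

section LocallyNilpotent

variable {R : Type*} [CommRing R]

/-- The degree of `x` with respect to a locally nilpotent derivation `D`: the largest `n` with
`D^[n] x ≠ 0`. The element `0` gets degree `0` rather than `-∞`. -/
def lndDegree (D : Derivation ℤ R R) (x : R) : ℕ :=
  sInf {n | D^[n + 1] x = 0}

variable {D : Derivation ℤ R R} {x y : R}

lemma iterate_lndDegree_ne_zero (hx : x ≠ 0) : D^[lndDegree D x] x ≠ 0 := by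
  rcases h : lndDegree D x with _ | m
  · exact hx
  · exact Nat.notMem_of_lt_sInf (m.lt_succ_self.trans_eq h.symm)

lemma lndDegree_eq {n : ℕ} (hn : D^[n] x ≠ 0) (hn' : D^[n + 1] x = 0) : lndDegree D x = n := by
  refine le_antisymm (Nat.sInf_le hn') (not_lt.1 fun hlt => hn ?_)
  exact iterate_derivation_eq_zero_of_le D hlt (Nat.sInf_mem (s := {n | D^[n + 1] x = 0}) ⟨n, hn'⟩)

lemma lndDegree_eq_zero_of_apply_eq_zero (h : D x = 0) : lndDegree D x = 0 :=
  Nat.le_zero.1 (Nat.sInf_le h)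

namespace IsLND

variable (hD : IsLND D)
include hD

lemma iterate_lndDegree_add_one (x : R) : D^[lndDegree D x + 1] x = 0 := by
  obtain ⟨n, hn, hx⟩ := hD x
  exact Nat.sInf_mem (s := {n | D^[n + 1] x = 0}) ⟨n - 1, by
    rwa [Set.mem_ofPred_eq, Nat.sub_add_cancel hn]⟩

lemma lndDegree_apply_add_one (hx : D x ≠ 0) : lndDegree D (D x) + 1 = lndDegree D x :=
  (lndDegree_eq (n := lndDegree D (D x) + 1) (iterate_lndDegree_ne_zero hx)
    (hD.iterate_lndDegree_add_one (D x))).symm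

lemma exists_iterate_slice (hx : D x ≠ 0) : ∃ m, D (D^[m] x) ≠ 0 ∧ D (D (D^[m] x)) = 0 := by
  refine ⟨lndDegree D (D x), ?_, ?_⟩
  · rw [← Function.iterate_succ_apply' D]
    exact iterate_lndDegree_ne_zero hx
  · rw [← Function.iterate_succ_apply' D, ← Function.iterate_succ_apply' D]
    exact hD.iterate_lndDegree_add_one (D x)

variable [IsDomain R] [CharZero R]

lemma lndDegree_mul (hx : x ≠ 0) (hy : y ≠ 0) :
    lndDegree D (x * y) = lndDegree D x + lndDegree D y := by
  have hx' := hD.iterate_lndDegree_add_one x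
  have hy' := hD.iterate_lndDegree_add_one y
  refine lndDegree_eq ?_ (iterate_derivation_mul_eq_zero D hx' hy')
  rw [iterate_derivation_mul_of_iterate_succ_eq_zero D hx' hy']
  exact smul_ne_zero (Nat.choose_pos (Nat.le_add_right _ _)).ne'
    (mul_ne_zero (iterate_lndDegree_ne_zero hx) (iterate_lndDegree_ne_zero hy))

lemma lndDegree_pow (hx : x ≠ 0) (n : ℕ) : lndDegree D (x ^ n) = n * lndDegree D x := by
  induction n with
  | zero => simp [lndDegree_eq_zero_of_apply_eq_zero]
  | succ n ih => rw [pow_succ, hD.lndDegree_mul (pow_ne_zero n hx) hx, ih, Nat.succ_mul]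

lemma apply_eq_zero_of_isUnit (hx : IsUnit x) : D x = 0 := by
  obtain ⟨y, hxy⟩ := hx.exists_right_inv
  have hdeg : lndDegree D x + lndDegree D y = 0 := by
    rw [← hD.lndDegree_mul hx.ne_zero (right_ne_zero_of_mul_eq_one hxy), hxy,
      lndDegree_eq_zero_of_apply_eq_zero D.map_one_eq_zero]
  simpa [Nat.eq_zero_of_add_eq_zero_right hdeg] using hD.iterate_lndDegree_add_one x

lemma of_mul_map_eq {R' : Type*} [CommRing R'] {D' : Derivation ℤ R' R'} (ι : R' →+* R)
    (hι : Function.Injective ι) {w z : R} (hw : w ≠ 0) (hz : z ≠ 0) (hDw : D w = 0)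
    (h : ∀ x, w * D (ι x) = z * ι (D' x)) : IsLND D' := by
  have hlt (u : R') (hu : D' u ≠ 0) : lndDegree D (ι (D' u)) < lndDegree D (ι u) := by
    have hu' : ι (D' u) ≠ 0 := (map_ne_zero_iff ι hι).2 hu
    have hDu : D (ι u) ≠ 0 := right_ne_zero_of_mul (h u ▸ mul_ne_zero hz hu')
    have hdeg := congrArg (lndDegree D) (h u)
    rw [hD.lndDegree_mul hw hDu, hD.lndDegree_mul hz hu',
      lndDegree_eq_zero_of_apply_eq_zero hDw] at hdeg
    have hsucc := hD.lndDegree_apply_add_one hDu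
    omega
  refine fun x => exists_pos_iterate_eq_zero D' x (fun j => lndDegree D (ι (D'^[j] x))) ?_
  simpa only [Function.iterate_succ_apply'] using fun j => hlt (D'^[j] x)

variable {C : Type*} [CommRing C] [IsDomain C] (φ : R →+* C) (hφ : Function.Injective φ)
  {E : Derivation ℤ C C} (hE : ∀ a, E (φ a) = φ (D a)) {n : ℕ} (hn : n ≠ 0)
include hφ hE hn

lemma lndDegree_lt_of_map_eq_pow {c : C} (hc : E c ≠ 0) {F F' : R} (hF : φ F = c ^ n)
    (hF' : φ F' = E c ^ n) : lndDegree D F' < lndDegree D F := by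
  have hc0 : c ≠ 0 := fun h => hc (by rw [h, map_zero])
  have hF0 : F ≠ 0 := (map_ne_zero_iff φ hφ).1 (hF ▸ pow_ne_zero n hc0)
  have hF'0 : F' ≠ 0 := (map_ne_zero_iff φ hφ).1 (hF' ▸ pow_ne_zero n hc)
  have hDF : D F ^ n = (n : R) ^ n * (F ^ (n - 1) * F') := by
    apply hφ
    simp only [map_pow, ← hE, hF, Derivation.leibniz_pow, map_mul, map_natCast, hF', nsmul_eq_mul,
      smul_eq_mul]
    ring
  have hDn : D ((n : R) ^ n) = 0 := by simp [Derivation.leibniz_pow]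
  have hnR : (n : R) ^ n ≠ 0 := pow_ne_zero n (Nat.cast_ne_zero.2 hn)
  have hFF' : F ^ (n - 1) * F' ≠ 0 := mul_ne_zero (pow_ne_zero _ hF0) hF'0
  have hDF0 : D F ≠ 0 := (pow_ne_zero_iff hn).1 (hDF ▸ mul_ne_zero hnR hFF')
  have hdeg := congrArg (lndDegree D) hDF
  rw [hD.lndDegree_pow hDF0, hD.lndDegree_mul hnR hFF',
    hD.lndDegree_mul (pow_ne_zero _ hF0) hF'0, hD.lndDegree_pow hF0,
    lndDegree_eq_zero_of_apply_eq_zero hDn] at hdeg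
  have hsucc := hD.lndDegree_apply_add_one hDF0
  obtain ⟨t, rfl⟩ := Nat.exists_eq_succ_of_ne_zero hn
  rw [Nat.succ_sub_one] at hdeg
  nlinarith

lemma exists_iterate_eq_zero_of_pow_mem_range {c : C} (hc : ∀ j, E^[j] c ^ n ∈ φ.range) :
    ∃ N, 0 < N ∧ E^[N] c = 0 := by
  choose F hF using hc
  refine exists_pos_iterate_eq_zero E c (fun j => lndDegree D (F j)) fun j hj => ?_
  refine hD.lndDegree_lt_of_map_eq_pow φ hφ hE hn hj (hF j) ?_
  rw [hF, Function.iterate_succ_apply']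

end IsLND

end LocallyNilpotent

section Derivations

lemma exists_derivation_mul_map_eq {A' A : Type*} [CommRing A'] [CommRing A] [IsDomain A]
    (ι : A' →+* A) (hι : Function.Injective ι) (D : Derivation ℤ A A) {w z : A} (hz : z ≠ 0)
    (h : ∀ x, ∃ q, w * D (ι x) = z * ι q) :
    ∃ D' : Derivation ℤ A' A', ∀ x, w * D (ι x) = z * ι (D' x) := by
  choose q hq using h
  have hadd (x y : A') : q (x + y) = q x + q y := by
    refine hι (mul_left_cancel₀ hz ?_)
    rw [← hq, map_add, map_add, map_add]
    linear_combination hq x + hq y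
  have hmul (x y : A') : q (x * y) = x • q y + y • q x := by
    refine hι (mul_left_cancel₀ hz ?_)
    rw [← hq, map_mul, Derivation.leibniz]
    simp only [smul_eq_mul, map_add, map_mul]
    linear_combination ι x * hq y + ι y * hq x
  exact ⟨Derivation.mk' (AddMonoidHom.mk' q hadd).toIntLinearMap hmul, hq⟩

lemma exists_forall_dvd_mul_apply {k R A : Type*} [CommRing k] [CommRing R] [CommRing A]
    [Algebra k R] [Algebra.FiniteType k R] (ι : R →+* A) (D : Derivation ℤ A A)
    (hk : ∀ c, D (ι (algebraMap k R c)) = 0) (S : Submonoid A) (z : A)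
    (h : ∀ x, ∃ s ∈ S, z ∣ s * D (ι x)) : ∃ s ∈ S, ∀ x, z ∣ s * D (ι x) := by
  obtain ⟨t, ht⟩ := Algebra.FiniteType.out (R := k) (A := R)
  choose s hsS hs using h
  refine ⟨∏ x ∈ t, s x, S.prod_mem fun x _ => hsS x, fun x => ?_⟩
  have hx : x ∈ Algebra.adjoin k (t : Set R) := ht ▸ Algebra.mem_top
  induction hx using Algebra.adjoin_induction with
  | mem x hx => exact (hs x).trans (mul_dvd_mul_right (Finset.dvd_prod_of_mem s hx) _)
  | algebraMap c => simp [hk]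
  | add x y _ _ hx hy =>
    rw [map_add, map_add, mul_add]
    exact dvd_add hx hy
  | mul x y _ _ hx hy =>
    rw [map_mul, Derivation.leibniz, smul_eq_mul, smul_eq_mul, mul_add, mul_left_comm,
      mul_left_comm _ (ι y)]
    exact dvd_add (hy.mul_left _) (hx.mul_left _)

lemma formallyEtale_of_isAlgebraic_field (A L : Type*) [CommRing A] [IsDomain A] [CharZero A]
    [Field L] [Algebra A L] [FaithfulSMul A L] [Algebra.IsAlgebraic A L] :
    Algebra.FormallyEtale A L := by
  let _ : Algebra (FractionRing A) L := FractionRing.liftAlgebra A L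
  have : IsScalarTower A (FractionRing A) L := FractionRing.isScalarTower_liftAlgebra A L
  have : CharZero (FractionRing A) :=
    charZero_of_injective_algebraMap (IsFractionRing.injective A (FractionRing A))
  have : Algebra.IsAlgebraic (FractionRing A) L :=
    (IsFractionRing.comap_isAlgebraic_iff (A := A)).1 inferInstance
  have : Algebra.FormallyEtale (FractionRing A) L := .of_isSeparable _ _
  have : Algebra.FormallyEtale A (FractionRing A) := .of_isLocalization (nonZeroDivisors A)
  exact .comp A (FractionRing A) L

lemma exists_derivation_apply_algebraMap_eq {R A L M : Type*} [CommRing R] [CommRing A]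
    [CommRing L] [Algebra R A] [Algebra R L] [Algebra A L] [IsScalarTower R A L]
    [Algebra.FormallyEtale A L] [AddCommGroup M] [Module R M] [Module A M] [Module L M]
    [IsScalarTower R A M] [IsScalarTower R L M] [IsScalarTower A L M] (D : Derivation R A M) :
    ∃ E : Derivation R L M, ∀ a, E (algebraMap A L a) = D a := by
  let g : Ω[L⁄R] →ₗ[L] M := D.liftKaehlerDifferential.liftBaseChange L ∘ₗ
    (KaehlerDifferential.tensorKaehlerEquivOfFormallyEtale R A L).symm.toLinearMap
  refine ⟨g.compDer (KaehlerDifferential.D R L), fun a => ?_⟩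
  simp [g, KaehlerDifferential.tensorKaehlerEquivOfFormallyEtale_symm_D_algebraMap]

end Derivations

section Hartogs

variable {B : Type*} [CommRing B] [IsDomain B] [IsNoetherianRing B]

lemma heightOne_of_mem_minimalPrimes_span_singleton {p : B} (hp : p ≠ 0) {P : Ideal B}
    (hP : P ∈ (Ideal.span {p}).minimalPrimes) : heightOne P := by
  have := hP.isPrime
  refine ⟨this, ⟨⊥, Ideal.isPrime_bot, bot_lt_iff_ne_bot.2 ?_⟩, fun q r hq hr hqr hrP => ?_⟩
  · rintro rfl
    exact hp (hP.1.2 (Ideal.mem_span_singleton_self p))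
  · have hPone := Ideal.height_le_one_of_isPrincipal_of_mem_minimalPrimes _ P hP
    have hqr := Ideal.height_add_one_le_of_lt_of_isPrime hqr
    have hrP := Ideal.height_add_one_le_of_lt_of_isPrime hrP
    have htwo : (2 : ℕ∞) ≤ 1 := calc
      (2 : ℕ∞) = 0 + 1 + 1 := by norm_num
      _ ≤ q.height + 1 + 1 := by gcongr; exact zero_le
      _ ≤ r.height + 1 := by gcongr
      _ ≤ 1 := hrP.trans hPone
    exact absurd htwo (by decide)

variable {K : Type*} [Field K] [Algebra B K] [IsFractionRing B K] [IsIntegrallyClosed B]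

/- If `w` mapped `P` into itself, it would be integral over `B`, hence in `B`, and `P` would be
everything. -/
lemma exists_algebraMap_eq_smul_notMem {P : Ideal B} (hPtop : P ≠ ⊤) {w : K}
    (hP : ∀ u, u ∈ P ↔ u • w ∈ (1 : Submodule B K)) :
    ∃ p ∈ P, ∃ v ∉ P, algebraMap B K v = p • w := by
  by_contra! hstable
  have hwone : w ∉ (1 : Submodule B K) := fun hw =>
    hPtop ((Ideal.eq_top_iff_one P).2 ((hP 1).2 (by rwa [one_smul])))
  obtain ⟨b, a, ha, rfl⟩ := IsFractionRing.div_surjective (A := B) w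
  have ha0 : algebraMap B K a ≠ 0 :=
    IsFractionRing.to_map_ne_zero_of_mem_nonZeroDivisors ha
  have haP : a ∈ P := (hP a).2 (Submodule.mem_one.2 ⟨b, by rw [Algebra.smul_def]; field_simp⟩)
  let N : Submodule B K := Submodule.map (Algebra.linearMap B K) P
  have hint : IsIntegral B (algebraMap B K b / algebraMap B K a) := by
    refine isIntegral_of_smul_mem_submodule N ?_ ((IsNoetherian.noetherian P).map _) _ ?_
    · exact (Submodule.ne_bot_iff N).2 ⟨_, ⟨a, haP, rfl⟩, ha0⟩
    · rintro _ ⟨u, hu, rfl⟩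
      obtain ⟨v, hv⟩ := Submodule.mem_one.1 ((hP u).1 hu)
      refine ⟨v, by_contra fun hvP => hstable u hu v hvP hv, ?_⟩
      rw [Algebra.linearMap_apply, hv, Algebra.smul_def, mul_comm]
      rfl
  exact hwone (Submodule.mem_one.2 (IsIntegrallyClosed.isIntegral_iff.1 hint))

lemma heightOne_of_forall_mem_iff_smul_mem_one {P : Ideal B} [P.IsPrime] {w : K}
    (hP : ∀ u, u ∈ P ↔ u • w ∈ (1 : Submodule B K)) : heightOne P := by
  obtain ⟨p, hpP, v, hvP, hv⟩ := exists_algebraMap_eq_smul_notMem ‹P.IsPrime›.ne_top hP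
  have hp0 : p ≠ 0 := by
    rintro rfl
    rw [zero_smul, map_eq_zero_iff _ (IsFractionRing.injective B K)] at hv
    exact hvP (hv ▸ P.zero_mem)
  refine heightOne_of_mem_minimalPrimes_span_singleton hp0
    ⟨⟨‹_›, (Ideal.span_singleton_le_iff_mem P).2 hpP⟩, fun Q ⟨hQ, hpQ⟩ hQP u hu => ?_⟩
  obtain ⟨t, ht⟩ := Submodule.mem_one.1 ((hP u).1 hu)
  have hvu : v * u = t * p := by
    apply IsFractionRing.injective B K
    rw [map_mul, map_mul, hv, ht, Algebra.smul_def, Algebra.smul_def]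
    ring
  have hmem : v * u ∈ Q := hvu ▸ Q.mul_mem_left t (hpQ (Ideal.mem_span_singleton_self p))
  exact (hQ.mem_or_mem hmem).resolve_left fun hvQ => hvP (hQP hvQ)

lemma mem_one_of_forall_heightOne {z : K}
    (h : ∀ P : Ideal B, heightOne P → ∃ f ∉ P, f • z ∈ (1 : Submodule B K)) :
    z ∈ (1 : Submodule B K) := by
  by_contra hz
  obtain ⟨P, hP, hzP⟩ := exists_le_isAssociatedPrime_of_isNoetherianRing B
    ((1 : Submodule B K).mkQ z) (by simpa using hz)
  obtain ⟨hPprime, w, hw⟩ := isAssociatedPrime_iff.1 hP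
  obtain ⟨w, rfl⟩ := (1 : Submodule B K).mkQ_surjective w
  have hcolon (x : K) (u : B) : u ∈ (⊥ : Submodule B (K ⧸ (1 : Submodule B K))).colon
      {(1 : Submodule B K).mkQ x} ↔ u • x ∈ (1 : Submodule B K) := by
    rw [Submodule.mem_colon_singleton, Submodule.mem_bot, ← map_smul, Submodule.mkQ_apply,
      Submodule.Quotient.mk_eq_zero]
  obtain ⟨f, hfP, hf⟩ := h P (heightOne_of_forall_mem_iff_smul_mem_one fun u => hw ▸ hcolon w u)
  exact hfP (hzP ((hcolon z f).2 hf))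

end Hartogs

section Veronese

lemma inclusion_mk_coe {R : Type*} [Ring R] {S T : Subring R} (h : S ≤ T) (x : T)
    (hx : (x : R) ∈ S) : Subring.inclusion h ⟨x, hx⟩ = x :=
  Subtype.ext (Subring.coe_inclusion h _)

variable {G : Type*} [AddCommGroup G] {B : Type*} [CommRing B] {𝒜 : G → AddSubgroup B}
  {H H' : AddSubgroup G} {i : G} {x : B}

lemma mem_verSub (hi : i ∈ H) (hx : x ∈ 𝒜 i) : x ∈ verSub 𝒜 H :=
  Subring.subset_closure (Set.mem_biUnion hi hx)

lemma verSub_mono (h : H' ≤ H) : verSub 𝒜 H' ≤ verSub 𝒜 H :=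
  Subring.closure_mono (Set.biUnion_subset_biUnion_left h)

lemma mem_Gsub (hx : x ∈ 𝒜 i) (hx0 : x ≠ 0) : i ∈ Gsub 𝒜 :=
  AddSubgroup.subset_closure fun hi => hx0 (AddSubgroup.mem_bot.1 (hi ▸ hx))

lemma Tmem.mono (hT : Tmem 𝒜 H') (h : H' ≤ H) : Tmem 𝒜 H := fun g hg =>
  let ⟨n, hn, hng⟩ := hT g hg
  ⟨n, hn, h hng⟩

/-- The subgroup generated by the degrees of the homogeneous elements of `S`. The group `𝕄̄(B, p)`
is the case where `S` is the complement of `p`. -/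
def degreeSubgroup (𝒜 : G → AddSubgroup B) (S : Set B) : AddSubgroup G :=
  AddSubgroup.closure {i | ∃ u ∈ S, u ∈ 𝒜 i}

lemma mem_degreeSubgroup {S : Set B} (hx : x ∈ S) (hi : x ∈ 𝒜 i) : i ∈ degreeSubgroup 𝒜 S :=
  AddSubgroup.subset_closure ⟨x, hx, hi⟩

lemma Mbar_eq_degreeSubgroup (p : Ideal B) : Mbar 𝒜 p = degreeSubgroup 𝒜 (p : Set B)ᶜ := by
  simp [Mbar, degreeSubgroup, Set.not_subset, and_comm]

lemma Gbar_le_Mbar {p : Ideal B} (hp : heightOne p) : Gbar 𝒜 ≤ Mbar 𝒜 p := by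
  rw [Gbar, if_pos ⟨p, hp⟩]
  exact iInf_le (fun q : {q : Ideal B // heightOne q} => Mbar 𝒜 q.1) ⟨p, hp⟩

section GradedMonoid

variable [SetLike.GradedMonoid 𝒜]

lemma exists_degree_mem_of_mem_closure
    (hx : x ∈ Submonoid.closure (⋃ i ∈ (H : Set G), (𝒜 i : Set B))) : ∃ i ∈ H, x ∈ 𝒜 i := by
  induction hx using Submonoid.closure_induction with
  | mem x hx => simpa using hx
  | one => exact ⟨0, H.zero_mem, SetLike.one_mem_graded 𝒜⟩
  | mul x y _ _ ihx ihy =>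
    obtain ⟨i, hi, hx⟩ := ihx
    obtain ⟨j, hj, hy⟩ := ihy
    exact ⟨i + j, H.add_mem hi hj, SetLike.mul_mem_graded hx hy⟩

lemma verSub_induction {motive : verSub 𝒜 H → Prop}
    (homogeneous : ∀ i ∈ H, ∀ x : verSub 𝒜 H, (x : B) ∈ 𝒜 i → motive x)
    (add : ∀ x y, motive x → motive y → motive (x + y)) (x : verSub 𝒜 H) : motive x := by
  have hhom {i : G} (hi : i ∈ H) {y : B} (hy : y ∈ 𝒜 i) : ∃ h : y ∈ verSub 𝒜 H, motive ⟨y, h⟩ :=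
    ⟨mem_verSub hi hy, homogeneous i hi _ hy⟩
  suffices h : ∀ y ∈ AddSubgroup.closure
      (Submonoid.closure (⋃ i ∈ (H : Set G), (𝒜 i : Set B)) : Set B),
      ∃ h : y ∈ verSub 𝒜 H, motive ⟨y, h⟩ from (h x (Subring.mem_closure_iff.1 x.2)).2
  intro y hy
  induction hy using AddSubgroup.closure_induction'' with
  | zero => exact hhom H.zero_mem (zero_mem _)
  | mem y hy =>
    obtain ⟨i, hi, hy⟩ := exists_degree_mem_of_mem_closure hy
    exact hhom hi hy
  | neg_mem y hy =>
    obtain ⟨i, hi, hy⟩ := exists_degree_mem_of_mem_closure hy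
    exact hhom hi (neg_mem hy)
  | add y z _ _ ihy ihz =>
    obtain ⟨hy, hy'⟩ := ihy
    obtain ⟨hz, hz'⟩ := ihz
    exact ⟨add_mem hy hz, add _ _ hy' hz'⟩

lemma exists_pow_mem_verSub (hT : Tmem 𝒜 H) (hx : x ∈ 𝒜 i) (hx0 : x ≠ 0) :
    ∃ t : ℕ, 0 < t ∧ t • i ∈ H ∧ x ^ t ∈ verSub 𝒜 H := by
  obtain ⟨t, ht, hti⟩ := hT i (mem_Gsub hx hx0)
  exact ⟨t, ht, hti, mem_verSub hti (SetLike.pow_mem_graded t hx)⟩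

lemma exists_homogeneous_add_mem_of_mem (hT : Tmem 𝒜 H) {S : Submonoid B} (hS : (0 : B) ∉ S)
    (hx : x ∈ S) (hi : x ∈ 𝒜 i) : ∃ u ∈ S, ∃ j, u ∈ 𝒜 j ∧ i + j ∈ H := by
  obtain ⟨t, ht, hti⟩ := hT i (mem_Gsub hi (ne_of_mem_of_not_mem hx hS))
  obtain ⟨s, rfl⟩ := Nat.exists_eq_succ_of_ne_zero ht.ne'
  refine ⟨x ^ s, S.pow_mem hx s, s • i, SetLike.pow_mem_graded s hi, ?_⟩
  rwa [← succ_nsmul']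

/- Modulo `H` every degree is torsion, so the degrees of homogeneous elements of `S` already form a
group. -/
lemma exists_homogeneous_add_mem (hT : Tmem 𝒜 H) {S : Submonoid B} (hS : (0 : B) ∉ S) {g : G}
    (hg : g ∈ H ⊔ degreeSubgroup 𝒜 S) : ∃ u ∈ S, ∃ j, u ∈ 𝒜 j ∧ g + j ∈ H := by
  rw [degreeSubgroup, ← H.closure_eq, ← AddSubgroup.closure_union] at hg
  induction hg using AddSubgroup.closure_induction with
  | mem g hg =>
    rcases hg with hg | ⟨u, hu, hug⟩
    · exact ⟨1, S.one_mem, 0, SetLike.one_mem_graded 𝒜, by simpa using hg⟩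
    · exact exists_homogeneous_add_mem_of_mem hT hS hu hug
  | zero => exact ⟨1, S.one_mem, 0, SetLike.one_mem_graded 𝒜, by simp⟩
  | add g g' _ _ ih ih' =>
    obtain ⟨u, hu, j, hj, hgj⟩ := ih
    obtain ⟨u', hu', j', hj', hgj'⟩ := ih'
    refine ⟨u * u', S.mul_mem hu hu', j + j', SetLike.mul_mem_graded hj hj', ?_⟩
    rw [add_add_add_comm]
    exact H.add_mem hgj hgj'
  | neg g _ ih =>
    obtain ⟨u, hu, j, hj, hgj⟩ := ih
    obtain ⟨v, hv, l, hl, hjl⟩ := exists_homogeneous_add_mem_of_mem hT hS hu hj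
    refine ⟨v, hv, l, hl, ?_⟩
    convert H.sub_mem hjl hgj using 1
    abel

end GradedMonoid

variable [DecidableEq G] [GradedRing 𝒜]

lemma degree_mem_of_mem_verSub (hx : x ∈ verSub 𝒜 H) (hx0 : x ≠ 0) (hi : x ∈ 𝒜 i) : i ∈ H := by
  by_contra hiH
  refine hx0 ?_
  rw [← DirectSum.decompose_of_mem_same 𝒜 hi]
  refine verSub_induction (motive := fun y => (DirectSum.decompose 𝒜 (y : B) i : B) = 0)
    (fun j hj y hy => ?_) (fun y z hy hz => ?_) ⟨x, hx⟩
  · exact DirectSum.decompose_of_mem_ne 𝒜 hy (ne_of_mem_of_not_mem hj hiH)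
  · simp [hy, hz]

lemma mem_sub_of_mul_mem [IsDomain B] {j : G} {z q : B} (hz : z ∈ 𝒜 i) (hz0 : z ≠ 0)
    (h : z * q ∈ 𝒜 j) : q ∈ 𝒜 (j - i) := by
  classical
  rw [← DirectSum.sum_support_decompose 𝒜 q]
  refine sum_mem fun l _ => ?_
  by_cases hlj : i + l = j
  · rw [← hlj, add_sub_cancel_left]
    exact SetLike.coe_mem _
  · have hzq : z * (DirectSum.decompose 𝒜 q l : B) = 0 := by
      rw [← DirectSum.coe_decompose_mul_add_of_left_mem 𝒜 hz,
        DirectSum.decompose_of_mem_ne 𝒜 h (Ne.symm hlj)]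
    rw [(mul_eq_zero.1 hzq).resolve_left hz0]
    exact zero_mem _

lemma isIntegral_verSub (hT : Tmem 𝒜 H) : Algebra.IsIntegral (verSub 𝒜 H) B := by
  classical
  refine ⟨fun x => ?_⟩
  rw [← DirectSum.sum_support_decompose 𝒜 x]
  refine IsIntegral.sum _ fun i _ => ?_
  by_cases hxi : (DirectSum.decompose 𝒜 x i : B) = 0
  · exact hxi ▸ isIntegral_zero
  · obtain ⟨t, ht, -, hxt⟩ := exists_pow_mem_verSub hT (SetLike.coe_mem _) hxi
    exact .of_pow ht (isIntegral_algebraMap (x := (⟨_, hxt⟩ : verSub 𝒜 H)))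

lemma finiteType_verSub {k : Type*} [CommRing k] [IsNoetherianRing k] [Algebra k B]
    [Algebra.FiniteType k B] [Algebra k (verSub 𝒜 H)] [IsScalarTower k (verSub 𝒜 H) B]
    (hT : Tmem 𝒜 H) : Algebra.FiniteType k (verSub 𝒜 H) := by
  have := isIntegral_verSub hT
  have : Algebra.FiniteType (verSub 𝒜 H) B := .of_restrictScalars_finiteType k _ B
  have : Module.Finite (verSub 𝒜 H) B := Algebra.IsIntegral.finite
  exact ⟨fg_of_fg_of_fg k (verSub 𝒜 H) B Algebra.FiniteType.out Module.Finite.fg_top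
    Subtype.coe_injective⟩

end Veronese

section HomogeneousDerivations

variable {G : Type*} [AddCommGroup G] {B : Type*} [CommRing B] {𝒜 : G → AddSubgroup B}
  {H : AddSubgroup G} {D : Derivation ℤ (verSub 𝒜 H) (verSub 𝒜 H)} {d : G}

/-- `D` is homogeneous of degree `d`. Thus `IsHomogDerOn 𝒜 (verSub 𝒜 H) D` says that such a `d`
exists. -/
def IsHomogDerOfDegree (D : Derivation ℤ (verSub 𝒜 H) (verSub 𝒜 H)) (d : G) : Prop :=
  ∀ (i : G) (x : verSub 𝒜 H), (x : B) ∈ 𝒜 i → (D x : B) ∈ 𝒜 (i + d)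

lemma IsHomogDerOfDegree.iterate (hd : IsHomogDerOfDegree D d) {i : G} {x : verSub 𝒜 H}
    (hx : (x : B) ∈ 𝒜 i) (m : ℕ) : ((D^[m] x : verSub 𝒜 H) : B) ∈ 𝒜 (i + m • d) := by
  induction m with
  | zero => simpa using hx
  | succ m ih =>
    rw [Function.iterate_succ_apply', succ_nsmul, ← add_assoc]
    exact hd _ _ ih

lemma exists_homogeneous_apply_ne_zero [SetLike.GradedMonoid 𝒜] (hD : D ≠ 0) :
    ∃ i ∈ H, ∃ x : verSub 𝒜 H, (x : B) ∈ 𝒜 i ∧ D x ≠ 0 := by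
  by_contra! hzero
  exact hD (Derivation.ext (verSub_induction hzero fun x y hx hy => by simp_all))

lemma IsHomogDerOfDegree.degree_mem [DecidableEq G] [GradedRing 𝒜]
    (hd : IsHomogDerOfDegree D d) (hD : D ≠ 0) : d ∈ H := by
  obtain ⟨i, hi, x, hx, hDx⟩ := exists_homogeneous_apply_ne_zero hD
  refine (H.add_mem_cancel_left hi).1 ?_
  exact degree_mem_of_mem_verSub (D x).2 (by simpa using hDx) (hd i x hx)

end HomogeneousDerivations

section GoingDown

variable {G : Type*} [AddCommGroup G] {B : Type*} [CommRing B]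
  {𝒜 : G → AddSubgroup B} {H H' : AddSubgroup G} {D : Derivation ℤ (verSub 𝒜 H) (verSub 𝒜 H)}
  {d e i : G} {x y : verSub 𝒜 H}

section GradedMonoid

variable [SetLike.GradedMonoid 𝒜]

/-- The monoid of nonzero homogeneous elements of `ker D`. -/
def homogKer (D : Derivation ℤ (verSub 𝒜 H) (verSub 𝒜 H)) : Submonoid (verSub 𝒜 H) :=
  (kerDer D).toSubmonoid ⊓ nonZeroDivisors _ ⊓
    (SetLike.homogeneousSubmonoid 𝒜).comap (verSub 𝒜 H).subtype

/-- The subgroup of `G` generated by `H'` and the degrees of the nonzero homogeneous elements of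
`ker D`. The order of `deg D` modulo this subgroup governs which multiples of `D` restrict to
`verSub 𝒜 H'`. -/
def kerDegrees (H' : AddSubgroup G) (D : Derivation ℤ (verSub 𝒜 H) (verSub 𝒜 H)) :
    AddSubgroup G :=
  H' ⊔ degreeSubgroup 𝒜 ((homogKer D).map (verSub 𝒜 H).subtype : Submonoid B)

lemma le_kerDegrees : H' ≤ kerDegrees H' D := le_sup_left

lemma sub_leading_term_mem (hd : IsHomogDerOfDegree D d) (hx : (x : B) ∈ 𝒜 i)
    (hy : (y : B) ∈ 𝒜 e) (m : ℕ) :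
    (((m.factorial : verSub 𝒜 H) * D y ^ m * x - D^[m] x * y ^ m : verSub 𝒜 H) : B) ∈
      𝒜 (i + m • (e + d)) := by
  push_cast
  refine sub_mem ?_ ?_
  · have h := SetLike.mul_mem_graded (SetLike.pow_mem_graded m (hd e y hy)) hx
    rw [mul_assoc, ← nsmul_eq_mul, add_comm i]
    exact nsmul_mem h _
  · convert SetLike.mul_mem_graded (hd.iterate hx m) (SetLike.pow_mem_graded m hy) using 2
    rw [smul_add]
    abel

lemma addOrderOf_kerDegrees_pos (hT : Tmem 𝒜 H')
    (hd : IsHomogDerOfDegree D d) (hy : (y : B) ∈ 𝒜 e)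
    (hDy : D y ≠ 0) : 0 < addOrderOf (d : G ⧸ kerDegrees H' D) := by
  have hy0 : y ≠ 0 := fun h => hDy (by rw [h, map_zero])
  have hdG : d ∈ Gsub 𝒜 := by
    have hsum : e + d ∈ Gsub 𝒜 := mem_Gsub (hd e y hy) (by simpa)
    exact (AddSubgroup.add_mem_cancel_left _ (mem_Gsub hy (by simpa))).1 hsum
  obtain ⟨n, hn, hnd⟩ := hT d hdG
  refine addOrderOf_pos_iff.2 (isOfFinAddOrder_iff_nsmul_eq_zero.2 ⟨n, hn, ?_⟩)
  rw [← QuotientAddGroup.mk_nsmul, QuotientAddGroup.eq_zero_iff]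
  exact le_kerDegrees hnd

variable [IsDomain B]

lemma mem_homogKer : x ∈ homogKer D ↔ D x = 0 ∧ x ≠ 0 ∧ ∃ i, (x : B) ∈ 𝒜 i := by
  rw [← mem_nonZeroDivisors_iff_ne_zero, ← and_assoc]
  rfl

lemma zero_notMem_map_homogKer : (0 : B) ∉ (homogKer D).map (verSub 𝒜 H).subtype := by
  rintro ⟨u, hu, hu0⟩
  exact (mem_homogKer.1 hu).2.1 (Subtype.coe_injective hu0)

lemma mem_kerDegrees (hx : D x = 0) (hx0 : x ≠ 0) (hi : (x : B) ∈ 𝒜 i) : i ∈ kerDegrees H' D :=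
  le_sup_right (a := H')
    (mem_degreeSubgroup ⟨x, mem_homogKer.2 ⟨hx, hx0, i, hi⟩, rfl⟩ hi)

lemma exists_homogKer_degree_mem (hT : Tmem 𝒜 H') (hd : IsHomogDerOfDegree D d)
    (hy : (y : B) ∈ 𝒜 e) (hDy : D y ≠ 0) (hDDy : D (D y) = 0) {r : verSub 𝒜 H}
    (hr : r ∈ homogKer D) : ∃ w ∈ homogKer D, r ∣ w ∧ ∃ ω, (w : B) ∈ 𝒜 ω ∧
      ω + d - (addOrderOf (d : G ⧸ kerDegrees H' D) - 1) • e ∈ H' := by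
  obtain ⟨n, hn⟩ := Nat.exists_eq_succ_of_ne_zero (addOrderOf_kerDegrees_pos hT hd hy hDy).ne'
  rw [hn, Nat.succ_sub_one]
  obtain ⟨hDr, hr0, ρ, hρ⟩ := mem_homogKer.1 hr
  have hnd : (n + 1) • d ∈ kerDegrees H' D := by
    rw [← QuotientAddGroup.eq_zero_iff, QuotientAddGroup.mk_nsmul, ← Nat.succ_eq_add_one, ← hn]
    exact addOrderOf_nsmul_eq_zero _
  have hg : ρ + (n + 1) • d - n • (e + d) ∈ kerDegrees H' D :=
    sub_mem (add_mem (mem_kerDegrees hDr hr0 hρ) hnd)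
      (nsmul_mem (mem_kerDegrees hDDy hDy (hd e y hy)) n)
  obtain ⟨_, ⟨c, hc, rfl⟩, j, hj, hgj⟩ :=
    exists_homogeneous_add_mem hT zero_notMem_map_homogKer hg
  refine ⟨r * c, mul_mem hr hc, dvd_mul_right r c, ρ + j, SetLike.mul_mem_graded hρ hj, ?_⟩
  convert hgj using 1
  rw [succ_nsmul, smul_add]
  abel

variable [CharZero B]

/- Killing the leading term of `x` multiplies `x` by an element of `ker D`, and the leading term
contributes to `D x` only multiples of `y ^ (m - 1)`, where the order of `d` divides `m`. -/
lemma exists_homogKer_pow_dvd_of_iterate_eq_zero (hd : IsHomogDerOfDegree D d)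
    (hy : (y : B) ∈ 𝒜 e) (hDy : D y ≠ 0) (hDDy : D (D y) = 0) (m : ℕ)
    (hi : i ∈ kerDegrees H' D) (hx : (x : B) ∈ 𝒜 i) (hm : D^[m] x = 0) :
    ∃ r ∈ homogKer D, y ^ (addOrderOf (d : G ⧸ kerDegrees H' D) - 1) ∣ r * D x := by
  induction m generalizing i x with
  | zero => exact ⟨1, one_mem _, by simp [show x = 0 from hm]⟩
  | succ m ih =>
    by_cases hw : D^[m] x = 0
    · exact ih hi hx hw
    have hmd : m • d ∈ kerDegrees H' D := by
      refine (AddSubgroup.add_mem_cancel_left _ hi).1 (mem_kerDegrees ?_ hw (hd.iterate hx m))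
      rwa [← Function.iterate_succ_apply' D]
    rcases Nat.eq_zero_or_pos m with rfl | hmpos
    · exact ⟨1, one_mem _, by simp [show D x = 0 from hm]⟩
    have hdvd : addOrderOf (d : G ⧸ kerDegrees H' D) ∣ m := by
      rw [addOrderOf_dvd_iff_nsmul_eq_zero, ← QuotientAddGroup.mk_nsmul,
        QuotientAddGroup.eq_zero_iff]
      exact hmd
    have hed : e + d ∈ kerDegrees H' D := mem_kerDegrees hDDy hDy (hd e y hy)
    obtain ⟨r, hr, hdiv⟩ := ih (add_mem hi (nsmul_mem hed m)) (sub_leading_term_mem hd hx hy m)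
      (iterate_derivation_sub_leading_term D hm hDDy)
    refine ⟨r * ((m.factorial : verSub 𝒜 H) * D y ^ m), mul_mem hr (mem_homogKer.2 ⟨?_, ?_, ?_⟩),
      pow_dvd_mul_derivation_of_sub_leading_term D
        (Nat.sub_le_sub_right (Nat.le_of_dvd hmpos hdvd) 1) hm hDDy hdiv⟩
    · simp [Derivation.leibniz_pow, hDDy]
    · exact mul_ne_zero (Nat.cast_ne_zero.2 m.factorial_ne_zero) (pow_ne_zero m hDy)
    · refine ⟨m • (e + d), ?_⟩
      push_cast
      rw [← nsmul_eq_mul]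
      exact nsmul_mem (SetLike.pow_mem_graded m (hd e y hy)) _

lemma exists_homogKer_pow_dvd (hle : H' ≤ H) (hD : IsLND D) (hd : IsHomogDerOfDegree D d)
    (hy : (y : B) ∈ 𝒜 e) (hDy : D y ≠ 0) (hDDy : D (D y) = 0) (x : verSub 𝒜 H') :
    ∃ r ∈ homogKer D, y ^ (addOrderOf (d : G ⧸ kerDegrees H' D) - 1) ∣
      r * D (Subring.inclusion (verSub_mono hle) x) := by
  induction x using verSub_induction with
  | homogeneous i hi x hx =>
    obtain ⟨m, -, hm⟩ := hD (Subring.inclusion (verSub_mono hle) x)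
    exact exists_homogKer_pow_dvd_of_iterate_eq_zero hd hy hDy hDDy m (le_kerDegrees hi)
      (by rwa [Subring.coe_inclusion]) hm
  | add x x' hx hx' =>
    obtain ⟨r, hr, hdiv⟩ := hx
    obtain ⟨r', hr', hdiv'⟩ := hx'
    refine ⟨r * r', mul_mem hr hr', ?_⟩
    rw [map_add, map_add, mul_add]
    refine dvd_add ?_ ?_
    · rw [mul_right_comm]
      exact hdiv.mul_right _
    · rw [mul_assoc]
      exact hdiv'.mul_left _

lemma exists_homogKer_forall_pow_dvd {k : Type*} [Field k] [Algebra k (verSub 𝒜 H')]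
    [Algebra.FiniteType k (verSub 𝒜 H')] (hle : H' ≤ H) (hD : IsLND D)
    (hd : IsHomogDerOfDegree D d) (hy : (y : B) ∈ 𝒜 e) (hDy : D y ≠ 0) (hDDy : D (D y) = 0) :
    ∃ r ∈ homogKer D, ∀ x, y ^ (addOrderOf (d : G ⧸ kerDegrees H' D) - 1) ∣
      r * D (Subring.inclusion (verSub_mono hle) x) := by
  refine exists_forall_dvd_mul_apply (k := k) _ D (fun c => ?_) _ _
    (exists_homogKer_pow_dvd hle hD hd hy hDy hDDy)
  rcases eq_or_ne c 0 with rfl | hc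
  · simp
  · exact hD.apply_eq_zero_of_isUnit (((IsUnit.mk0 c hc).map (algebraMap k _)).map _)

end GradedMonoid

variable [IsDomain B] [DecidableEq G] [GradedRing 𝒜]

lemma exists_isHomogDerOfDegree_mul_map_eq (hle : H' ≤ H) (hd : IsHomogDerOfDegree D d)
    {w z : verSub 𝒜 H} {ω ζ : G} (hw : (w : B) ∈ 𝒜 ω) (hz : (z : B) ∈ 𝒜 ζ) (hz0 : z ≠ 0)
    (hdeg : ω + d - ζ ∈ H') (h : ∀ x, z ∣ w * D (Subring.inclusion (verSub_mono hle) x)) :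
    ∃ D' : Derivation ℤ (verSub 𝒜 H') (verSub 𝒜 H'), IsHomogDerOfDegree D' (ω + d - ζ) ∧
      ∀ x, w * D (Subring.inclusion (verSub_mono hle) x) =
        z * Subring.inclusion (verSub_mono hle) (D' x) := by
  have hz0' : (z : B) ≠ 0 := by simpa
  have hquot {i : G} {x : verSub 𝒜 H'} (hx : (x : B) ∈ 𝒜 i) {q : verSub 𝒜 H}
      (hq : w * D (Subring.inclusion (verSub_mono hle) x) = z * q) :
      (q : B) ∈ 𝒜 (i + (ω + d - ζ)) := by
    have hmem : (z : B) * q ∈ 𝒜 (ω + (i + d)) := by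
      rw [← Subring.coe_mul, ← hq, Subring.coe_mul]
      exact SetLike.mul_mem_graded hw (hd i _ (by rwa [Subring.coe_inclusion]))
    convert mem_sub_of_mul_mem hz hz0' hmem using 2
    abel
  have hexists (x : verSub 𝒜 H') : ∃ q, w * D (Subring.inclusion (verSub_mono hle) x) =
      z * Subring.inclusion (verSub_mono hle) q := by
    induction x using verSub_induction with
    | homogeneous i hi x hx =>
      obtain ⟨q, hq⟩ := h x
      have hqH' : (q : B) ∈ verSub 𝒜 H' := mem_verSub (H'.add_mem hi hdeg) (hquot hx hq)
      exact ⟨⟨q, hqH'⟩, by rw [hq, inclusion_mk_coe]⟩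
    | add x x' hx hx' =>
      obtain ⟨q, hq⟩ := hx
      obtain ⟨q', hq'⟩ := hx'
      exact ⟨q + q', by simp only [map_add, mul_add, hq, hq']⟩
  obtain ⟨D', hD'⟩ :=
    exists_derivation_mul_map_eq _ (Subring.inclusion_injective (verSub_mono hle)) D hz0 hexists
  refine ⟨D', fun i x hx => ?_, hD'⟩
  rw [← Subring.coe_inclusion (verSub_mono hle)]
  exact hquot hx (hD' x)

variable [CharZero B]

lemma mem_Xset_of_slice {k : Type*} [Field k] [Algebra k (verSub 𝒜 H')]
    [Algebra.FiniteType k (verSub 𝒜 H')] (hT : Tmem 𝒜 H') (hle : H' ≤ H) (hD : IsLND D)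
    (hd : IsHomogDerOfDegree D d) (hy : (y : B) ∈ 𝒜 e) (hDy : D y ≠ 0) (hDDy : D (D y) = 0) :
    H' ∈ Xset 𝒜 := by
  have hy0 : y ≠ 0 := fun h => hDy (by rw [h, map_zero])
  obtain ⟨r, hr, hdvd⟩ := exists_homogKer_forall_pow_dvd (k := k) hle hD hd hy hDy hDDy
  obtain ⟨w, hw, hrw, ω, hω, hdeg⟩ := exists_homogKer_degree_mem hT hd hy hDy hDDy hr
  obtain ⟨hDw, hw0, -⟩ := mem_homogKer.1 hw
  obtain ⟨D', hd', hD'⟩ := exists_isHomogDerOfDegree_mul_map_eq hle hd hω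
    (by simpa using SetLike.pow_mem_graded _ hy) (pow_ne_zero _ hy0) hdeg
    fun x => (hdvd x).trans (mul_dvd_mul_right hrw _)
  have hD'lnd := hD.of_mul_map_eq _ (Subring.inclusion_injective (verSub_mono hle)) hw0
    (pow_ne_zero _ hy0) hDw hD'
  refine ⟨hT, D', hD'lnd, ⟨_, hd'⟩, ?_⟩
  rintro rfl
  obtain ⟨s, hs, -, hys⟩ := exists_pow_mem_verSub hT hy (by simpa)
  have hDys := hD' ⟨(y ^ s : verSub 𝒜 H), hys⟩
  rw [inclusion_mk_coe, Derivation.coe_zero, Pi.zero_apply, map_zero, mul_zero] at hDys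
  simp [Derivation.leibniz_pow, hw0, hy0, hDy, hs.ne'] at hDys

lemma mem_Xset_of_le {k : Type*} [Field k] [Algebra k B] [Algebra.FiniteType k B]
    (hoverk : ∀ c : k, algebraMap k B c ∈ 𝒜 0) (hT : Tmem 𝒜 H') (hle : H' ≤ H)
    (hH : H ∈ Xset 𝒜) : H' ∈ Xset 𝒜 := by
  let _ : Algebra k (verSub 𝒜 H') := ((algebraMap k B).codRestrict _
    fun c => mem_verSub H'.zero_mem (hoverk c)).toAlgebra
  have : IsScalarTower k (verSub 𝒜 H') B := .of_algebraMap_eq fun _ => rfl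
  have : Algebra.FiniteType k (verSub 𝒜 H') := finiteType_verSub hT
  obtain ⟨-, D, hD, ⟨d, hd⟩, hD0⟩ := hH
  obtain ⟨i, -, x, hx, hDx⟩ := exists_homogeneous_apply_ne_zero hD0
  obtain ⟨m, hDy, hDDy⟩ := hD.exists_iterate_slice hDx
  exact mem_Xset_of_slice (k := k) hT hle hD hd (IsHomogDerOfDegree.iterate hd hx m) hDy hDDy

end GoingDown

section GoingUp

lemma pow_smul_derivation_mem_one {B L : Type*} [CommRing B] [CommRing L] [Algebra B L]
    (E : Derivation ℤ L L) {u c : B} {t : ℕ} (ht : IsUnit (t : B))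
    (hut : E (algebraMap B L (u ^ t)) ∈ (1 : Submodule B L))
    (huc : E (algebraMap B L (u * c)) ∈ (1 : Submodule B L)) :
    u ^ t • E (algebraMap B L c) ∈ (1 : Submodule B L) := by
  rw [← Submodule.smul_mem_iff_of_isUnit _ ht]
  have hleibniz : (t : B) • u ^ t • E (algebraMap B L c) =
      (t * u ^ (t - 1) : B) • E (algebraMap B L (u * c)) - c • E (algebraMap B L (u ^ t)) := by
    rcases t with _ | t
    · simp
    · rw [map_mul, map_pow, Derivation.leibniz, Derivation.leibniz_pow]
      simp only [smul_eq_mul, nsmul_eq_mul]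
      simp only [Algebra.smul_def, map_mul, map_pow, map_natCast, Nat.succ_sub_one]
      ring
  rw [hleibniz]
  exact sub_mem (Submodule.smul_mem _ _ huc) (Submodule.smul_mem _ _ hut)

variable {G : Type*} [AddCommGroup G] {B : Type*} [CommRing B] [IsDomain B]
  {𝒜 : G → AddSubgroup B} {H K : AddSubgroup G} {i d : G} {c : B}
  {D : Derivation ℤ (verSub 𝒜 H) (verSub 𝒜 H)} {L : Type*} [Field L] [Algebra B L]
  [IsFractionRing B L] {E : Derivation ℤ L L}

section GradedMonoid

variable [SetLike.GradedMonoid 𝒜]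

lemma derivation_mem_one_of_mem_sup_Gbar [IsNoetherianRing B] [IsIntegrallyClosed B] [Algebra ℚ B]
    (hT : Tmem 𝒜 H) (hE : ∀ a ∈ verSub 𝒜 H, E (algebraMap B L a) ∈ (1 : Submodule B L))
    (hi : i ∈ H ⊔ Gbar 𝒜) (hc : c ∈ 𝒜 i) : E (algebraMap B L c) ∈ (1 : Submodule B L) := by
  refine mem_one_of_forall_heightOne fun P hP => ?_
  have := hP.1
  have h0 : (0 : B) ∉ P.primeCompl := fun h => h P.zero_mem
  have hiP : i ∈ H ⊔ degreeSubgroup 𝒜 P.primeCompl :=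
    sup_le_sup_left ((Gbar_le_Mbar hP).trans (Mbar_eq_degreeSubgroup P).le) H hi
  obtain ⟨u, hu, j, hj, hij⟩ := exists_homogeneous_add_mem hT h0 hiP
  obtain ⟨t, ht, -, hut⟩ := exists_pow_mem_verSub hT hj (ne_of_mem_of_not_mem hu h0)
  have htunit : IsUnit (t : B) := by
    simpa using (IsUnit.mk0 (t : ℚ) (Nat.cast_ne_zero.2 ht.ne')).map (algebraMap ℚ B)
  refine ⟨u ^ t, P.primeCompl.pow_mem hu t,
    pow_smul_derivation_mem_one E htunit (hE _ hut) (hE _ (mem_verSub hij ?_))⟩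
  rw [mul_comm]
  exact SetLike.mul_mem_graded hc hj

lemma IsLND.of_extending [CharZero B] (hD : IsLND D) (hT : Tmem 𝒜 H) (hle : H ≤ K)
    (hdH : d ∈ H) {D' : Derivation ℤ (verSub 𝒜 K) (verSub 𝒜 K)} (hd : IsHomogDerOfDegree D' d)
    (hD' : ∀ a, D' (Subring.inclusion (verSub_mono hle) a) =
      Subring.inclusion (verSub_mono hle) (D a)) : IsLND D' := by
  intro x
  induction x using verSub_induction with
  | homogeneous i _ x hx =>
    rcases eq_or_ne x 0 with rfl | hx0
    · exact ⟨1, one_pos, map_zero _⟩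
    obtain ⟨t, ht, htH, -⟩ := exists_pow_mem_verSub hT hx (by simpa)
    refine hD.exists_iterate_eq_zero_of_pow_mem_range (Subring.inclusion (verSub_mono hle))
      (Subring.inclusion_injective _) hD' ht.ne' fun j => ?_
    have hmem : ((D'^[j] x ^ t : verSub 𝒜 K) : B) ∈ verSub 𝒜 H := by
      refine mem_verSub (i := t • (i + j • d)) ?_ ?_
      · rw [smul_add]
        exact H.add_mem htH (nsmul_mem (nsmul_mem hdH j) t)
      · rw [Subring.coe_pow]
        exact SetLike.pow_mem_graded t (hd.iterate hx j)
    exact ⟨⟨_, hmem⟩, inclusion_mk_coe _ _ hmem⟩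
  | add x x' hx hx' =>
    obtain ⟨n, hn, hnx⟩ := hx
    obtain ⟨n', -, hnx'⟩ := hx'
    refine ⟨n + n', by omega, ?_⟩
    rw [iterate_map_add, iterate_derivation_eq_zero_of_le D' (Nat.le_add_right n n') hnx,
      iterate_derivation_eq_zero_of_le D' (Nat.le_add_left n' n) hnx', add_zero]

end GradedMonoid

variable [DecidableEq G] [GradedRing 𝒜]

lemma exists_derivation_fractionRing_extending [CharZero B] (hT : Tmem 𝒜 H)
    (D : Derivation ℤ (verSub 𝒜 H) (verSub 𝒜 H)) : ∃ E : Derivation ℤ L L,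
      ∀ a : verSub 𝒜 H, E (algebraMap B L a) = algebraMap B L (D a) := by
  have := isIntegral_verSub hT
  have : Algebra.IsAlgebraic B L := IsLocalization.isAlgebraic L (nonZeroDivisors B)
  have : Algebra.IsAlgebraic (verSub 𝒜 H) L := .trans _ B L
  have : FaithfulSMul (verSub 𝒜 H) L := (faithfulSMul_iff_algebraMap_injective _ _).2
    ((IsFractionRing.injective B L).comp Subtype.coe_injective)
  have := formallyEtale_of_isAlgebraic_field (verSub 𝒜 H) L
  exact exists_derivation_apply_algebraMap_eq ((Algebra.linearMap (verSub 𝒜 H) L).compDer D)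

lemma mem_of_algebraMap_eq_derivation [CharZero B] (hT : Tmem 𝒜 H) (hd : IsHomogDerOfDegree D d)
    (hE : ∀ a : verSub 𝒜 H, E (algebraMap B L a) = algebraMap B L (D a)) (hc : c ∈ 𝒜 i) {b : B}
    (hb : algebraMap B L b = E (algebraMap B L c)) : b ∈ 𝒜 (i + d) := by
  have hinj := IsFractionRing.injective B L
  rcases eq_or_ne c 0 with rfl | hc0
  · rw [map_zero, map_zero, map_eq_zero_iff _ hinj] at hb
    exact hb ▸ zero_mem _
  obtain ⟨t, ht, -, hct⟩ := exists_pow_mem_verSub hT hc hc0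
  have hleibniz : t • c ^ (t - 1) * b = D ⟨c ^ t, hct⟩ := by
    apply hinj
    rw [← hE, map_pow, Derivation.leibniz_pow, ← hb]
    simp [mul_assoc]
  have htc : t • c ^ (t - 1) ≠ 0 := smul_ne_zero ht.ne' (pow_ne_zero _ hc0)
  have hmem := mem_sub_of_mul_mem (nsmul_mem (SetLike.pow_mem_graded (t - 1) hc) t) htc
    (hleibniz ▸ hd (t • i) ⟨c ^ t, hct⟩ (SetLike.pow_mem_graded t hc))
  convert hmem using 2
  obtain ⟨s, rfl⟩ := Nat.exists_eq_succ_of_ne_zero ht.ne'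
  rw [Nat.succ_sub_one, succ_nsmul]
  abel

lemma exists_isHomogDerOfDegree_extending [CharZero B] (hT : Tmem 𝒜 H) (hle : H ≤ K)
    (hd : IsHomogDerOfDegree D d) (hdK : d ∈ K)
    (hE : ∀ a : verSub 𝒜 H, E (algebraMap B L a) = algebraMap B L (D a))
    (hmem : ∀ i ∈ K, ∀ c ∈ 𝒜 i, E (algebraMap B L c) ∈ (1 : Submodule B L)) :
    ∃ D' : Derivation ℤ (verSub 𝒜 K) (verSub 𝒜 K), IsHomogDerOfDegree D' d ∧
      ∀ a, D' (Subring.inclusion (verSub_mono hle) a) =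
        Subring.inclusion (verSub_mono hle) (D a) := by
  let ι : verSub 𝒜 K →+* L := (algebraMap B L).comp (verSub 𝒜 K).subtype
  have hι : Function.Injective ι := (IsFractionRing.injective B L).comp Subtype.coe_injective
  have hexists (x : verSub 𝒜 K) : ∃ q, 1 * E (ι x) = 1 * ι q := by
    simp only [one_mul]
    induction x using verSub_induction with
    | homogeneous i hi x hx =>
      obtain ⟨b, hb⟩ := Submodule.mem_one.1 (hmem i hi x hx)
      have hbi := mem_of_algebraMap_eq_derivation hT hd hE hx hb
      exact ⟨⟨b, mem_verSub (K.add_mem hi hdK) hbi⟩, hb.symm⟩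
    | add x x' hx hx' =>
      obtain ⟨q, hq⟩ := hx
      obtain ⟨q', hq'⟩ := hx'
      exact ⟨q + q', by rw [map_add, map_add, map_add, hq, hq']⟩
  obtain ⟨D', hD'⟩ := exists_derivation_mul_map_eq ι hι E one_ne_zero hexists
  simp only [one_mul] at hD'
  refine ⟨D', fun i x hx => ?_, fun a => hι ?_⟩
  · exact mem_of_algebraMap_eq_derivation hT hd hE hx (hD' x).symm
  · rw [← hD']
    simpa [ι] using hE a

lemma sup_Gbar_mem_Xset [IsNoetherianRing B] [IsIntegrallyClosed B] [Algebra ℚ B]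
    (hH : H ∈ Xset 𝒜) : H ⊔ Gbar 𝒜 ∈ Xset 𝒜 := by
  have : CharZero B := algebraRat.charZero B
  obtain ⟨hT, D, hD, ⟨d, hd⟩, hD0⟩ := hH
  have hle : H ≤ H ⊔ Gbar 𝒜 := le_sup_left
  have hdH : d ∈ H := IsHomogDerOfDegree.degree_mem hd hD0
  obtain ⟨E, hE⟩ := exists_derivation_fractionRing_extending (L := FractionRing B) hT D
  have hEone (a : B) (ha : a ∈ verSub 𝒜 H) : E (algebraMap B _ a) ∈ (1 : Submodule B _) :=
    Submodule.mem_one.2 ⟨D ⟨a, ha⟩, (hE ⟨a, ha⟩).symm⟩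
  obtain ⟨D', hd', hD'⟩ := exists_isHomogDerOfDegree_extending hT hle hd (hle hdH)
    hE fun i hi c hc => derivation_mem_one_of_mem_sup_Gbar hT hEone hi hc
  refine ⟨hT.mono hle, D', hD.of_extending hT hle hdH hd' hD', ⟨d, hd'⟩, ?_⟩
  rintro rfl
  refine hD0 (Derivation.ext fun a => Subring.inclusion_injective (verSub_mono hle) ?_)
  rw [← hD', Derivation.coe_zero, Derivation.coe_zero, Pi.zero_apply, Pi.zero_apply, map_zero]

end GoingUp

section MaximalElements

variable {G : Type*} [AddCommGroup G] {B : Type*} [CommRing B] {𝒜 : G → AddSubgroup B}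
  {H : AddSubgroup G}

lemma wellFoundedGT_addSubgroup (G : Type*) [AddCommGroup G] [AddGroup.FG G] :
    WellFoundedGT (AddSubgroup G) :=
  have : Module.Finite ℤ G := Module.Finite.iff_addGroup_fg.2 inferInstance
  (AddSubgroup.toIntSubmodule (M := G)).strictMono.wellFoundedGT

lemma mem_Mset_iff : H ∈ Mset 𝒜 ↔ Maximal (· ∈ Xset 𝒜) H :=
  and_congr_right fun _ => forall₃_congr fun _ _ hle => ⟨fun h => h.le, fun h => h.antisymm hle⟩

lemma exists_le_mem_Mset [AddGroup.FG G] (hH : H ∈ Xset 𝒜) : ∃ M ∈ Mset 𝒜, H ≤ M := by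
  have := wellFoundedGT_addSubgroup G
  obtain ⟨M, hHM, hM⟩ := exists_maximal_ge_of_wellFoundedGT (· ∈ Xset 𝒜) H hH
  exact ⟨M, mem_Mset_iff.2 hM, hHM⟩

end MaximalElements

/-- Let k be a field of characteristic 0 and B an affine k-domain graded over k by a
finitely generated abelian group G. Then:
(a) 𝒳(B) = ⋃_{H ∈ ℳ(B)} 𝕋_H(B), where 𝕋_H(B) = { H' ∈ 𝕋(B) : H' ⊆ H };
(b) if B is normal, then every H ∈ ℳ(B) satisfies 𝔾̄(B) ⊆ H. -/
theorem Xset_eq_union_and_Mset_above_Gbar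
    {k : Type*} [Field k] [CharZero k]
    {G : Type*} [AddCommGroup G] [DecidableEq G] [AddGroup.FG G]
    {B : Type*} [CommRing B] [IsDomain B] [Algebra k B] [Algebra.FiniteType k B]
    (𝒜 : G → AddSubgroup B) [GradedRing 𝒜]
    (hoverk : ∀ c : k, algebraMap k B c ∈ 𝒜 0) :
    (Xset 𝒜 = ⋃ H ∈ Mset 𝒜, { H' : AddSubgroup G | Tmem 𝒜 H' ∧ H' ≤ H }) ∧
    (IsIntegrallyClosed B → ∀ H ∈ Mset 𝒜, Gbar 𝒜 ≤ H) := by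
  have : CharZero B := charZero_of_injective_algebraMap (algebraMap k B).injective
  refine ⟨Set.Subset.antisymm (fun H hH => ?_) (Set.iUnion₂_subset fun M hM H hH => ?_),
    fun hnormal H hH => ?_⟩
  · obtain ⟨M, hM, hHM⟩ := exists_le_mem_Mset hH
    exact Set.mem_biUnion hM ⟨hH.1, hHM⟩
  · exact mem_Xset_of_le hoverk hH.1 hH.2 hM.1
  · let _ : Algebra ℚ B := Algebra.compHom B (algebraMap ℚ k)
    have : IsNoetherianRing B := Algebra.FiniteType.isNoetherianRing k B
    exact le_sup_right.trans (hH.2 _ (sup_Gbar_mem_Xset hH.1) le_sup_left).le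
end
end

section
/- Let k be a field of characteristic 0 and R = k[X_1, …, X_n] a polynomial ring with n ≥ 2, equipped with an ℕ-grading R = ⊕_{i∈ℕ} R_i such that each X_j is homogeneous and X_1 has positive degree. Let f be a homogeneous prime element of R such that f ∉ R_0[X_1]. Then: (a) R/(f − c)R is an integral domain for every c ∈ k; (b) if R/fR is rigid, then R/(f − c)R is rigid for every c ∈ k. -/
set_option synthInstance.maxHeartbeats 400000

noncomputable section

open MvPolynomial

/-!
Let `f` have degree `m > 0`, and let `A` be the coordinate ring of the hypersurface `f = c * T ^ m`.
Over `T = 0` this hypersurface is `f = 0`, while rescaling the coordinates by their weights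
identifies its part over `T ≠ 0` with that of the cylinder over the fibre `f = c`. Thus
`A / T = R / f`, and `A` embeds into the polynomial ring `L` over `R / (f - c)` with the same
localization at `T`. By Eisenstein's criterion `A` is a domain, hence so are `L` and `R / (f - c)`.

A locally nilpotent derivation of `R / (f - c)` is `k`-linear, so it extends to one of `L` that
kills `T`. Multiplied by a power of `T` it restricts to a locally nilpotent derivation `E` of `A`.
The derivation that `E` induces on `A / T` vanishes when `R / f` is rigid, so that `E = T * E'`,
where `E'` is again locally nilpotent and kills `T`. Repeating this, every power of `T` divides the
values of `E`, and `E = 0` because `A` is a noetherian domain.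
-/

open scoped Polynomial

/-- A ring is rigid if its only locally nilpotent derivation is zero. -/
def IsRigid (R : Type*) [CommRing R] : Prop :=
  ∀ D : Derivation ℤ R R, IsLND D → D = 0

theorem iterate_map_eq_zero_of_le {F M : Type*} [Zero M] [FunLike F M M] [ZeroHomClass F M M]
    {φ : F} {m n : ℕ} {a : M} (hm : φ^[m] a = 0) (hmn : m ≤ n) : φ^[n] a = 0 := by
  obtain ⟨l, rfl⟩ := Nat.exists_eq_add_of_le' hmn
  rw [Function.iterate_add_apply, hm, iterate_map_zero]

section LocallyNilpotent

variable {k A B : Type*} [CommRing k] [CommRing A] [CommRing B] [Algebra k A]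

theorem derivation_iterate_mul (D : Derivation k A A) (n : ℕ) (a b : A) :
    D^[n] (a * b) =
      ∑ ij ∈ Finset.HasAntidiagonal.antidiagonal n, n.choose ij.1 • (D^[ij.1] a * D^[ij.2] b) := by
  induction n with
  | zero => simp
  | succ n ih =>
    rw [Finset.sum_antidiagonal_choose_succ_nsmul (M := A) (fun i j => D^[i] a * D^[j] b) n]
    simp only [Function.iterate_succ_apply', ih, map_sum, map_nsmul, Derivation.leibniz,
      smul_eq_mul, smul_add, Finset.sum_add_distrib, add_right_inj]
    refine Finset.sum_congr rfl fun ⟨i, j⟩ hij => ?_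
    have hn : i + j = n := Finset.HasAntidiagonal.mem_antidiagonal.mp hij
    rw [n.choose_symm_of_eq_add hn.symm, mul_comm]

theorem derivation_iterate_add_mul {D : Derivation k A A} {m n : ℕ} {a b : A}
    (ha : D^[m + 1] a = 0) (hb : D^[n + 1] b = 0) :
    D^[m + n] (a * b) = (m + n).choose m • (D^[m] a * D^[n] b) := by
  rw [derivation_iterate_mul, Finset.sum_eq_single (m, n)]
  · rintro ⟨i, j⟩ hij hne
    rw [Finset.HasAntidiagonal.mem_antidiagonal] at hij
    obtain hi | hj : m + 1 ≤ i ∨ n + 1 ≤ j := by grind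
    · rw [iterate_map_eq_zero_of_le ha hi, zero_mul, smul_zero]
    · rw [iterate_map_eq_zero_of_le hb hj, mul_zero, smul_zero]
  · simp

theorem derivation_iterate_smul_apply {D : Derivation k A A} {t : A} (ht : D t = 0) (n : ℕ)
    (a : A) : (t • D)^[n] a = t ^ n * D^[n] a := by
  induction n with
  | zero => simp
  | succ n ih =>
    simp only [Function.iterate_succ_apply', ih, Derivation.smul_apply, Derivation.leibniz,
      Derivation.leibniz_pow, ht, smul_eq_mul, smul_zero, mul_zero, add_zero]
    ring

namespace IsLND

theorem exists_iterate_ne_zero {D : Derivation ℤ A A} (hD : IsLND D) {a : A} (ha : a ≠ 0) :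
    ∃ n, D^[n] a ≠ 0 ∧ D^[n + 1] a = 0 :=
  Nat.exists_not_and_succ_of_not_zero_of_exists (p := fun n => D^[n] a = 0) ha
    ((hD a).imp fun _ => And.right)

theorem apply_eq_zero_of_isUnit_s8 [IsDomain A] [CharZero A] {D : Derivation ℤ A A} (hD : IsLND D)
    {u : A} (hu : IsUnit u) : D u = 0 := by
  obtain ⟨v, huv⟩ := hu.exists_right_inv
  obtain ⟨m, hm, hm'⟩ := hD.exists_iterate_ne_zero (left_ne_zero_of_mul_eq_one huv)
  obtain ⟨n, hn, hn'⟩ := hD.exists_iterate_ne_zero (right_ne_zero_of_mul_eq_one huv)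
  -- the largest `n` with `D^[n] a ≠ 0` turns products into sums, and it is `0` for `a = 1`
  have hne : D^[m + n] 1 ≠ 0 := by
    rw [← huv, derivation_iterate_add_mul hm' hn']
    exact smul_ne_zero (Nat.choose_pos (Nat.le_add_right m n)).ne' (mul_ne_zero hm hn)
  have hm0 : m = 0 := by
    by_contra hm0
    exact hne (iterate_map_eq_zero_of_le (m := 1) (by simp) (by omega))
  simpa [hm0] using hm'

theorem apply_algebraMap_eq_zero {K : Type*} [Field K] [PerfectField K] [IsDomain A] [Algebra K A]
    {D : Derivation ℤ A A} (hD : IsLND D) (c : K) : D (algebraMap K A c) = 0 := by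
  obtain ⟨p, hp⟩ := ExpChar.exists K
  cases hp with
  | zero =>
    have : CharZero A := charZero_of_injective_algebraMap (algebraMap K A).injective
    obtain rfl | hc := eq_or_ne c 0
    · rw [map_zero, map_zero]
    · exact hD.apply_eq_zero_of_isUnit_s8 (hc.isUnit.map _)
  | prime hp =>
    have : Fact p.Prime := ⟨hp⟩
    have : PerfectRing K p := PerfectField.toPerfectRing p
    have : CharP A p := charP_of_injective_algebraMap (algebraMap K A).injective p
    obtain ⟨b, rfl⟩ := surjective_frobenius K p c
    rw [frobenius_def, map_pow, Derivation.leibniz_pow, nsmul_eq_mul, CharP.cast_eq_zero, zero_mul]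

theorem smul {D : Derivation ℤ A A} (hD : IsLND D) {t : A} (ht : D t = 0) : IsLND (t • D) :=
  fun a => (hD a).imp fun n hn => ⟨hn.1, by
    rw [derivation_iterate_smul_apply ht, hn.2, mul_zero]⟩

theorem of_smul {D : Derivation ℤ A A} {t : A} (ht : D t = 0) (ht' : IsLeftRegular t)
    (hD : IsLND (t • D)) : IsLND D :=
  fun a => (hD a).imp fun n hn => ⟨hn.1, by
    rw [derivation_iterate_smul_apply ht] at hn
    exact (ht'.pow n).mul_left_eq_zero_iff.mp hn.2⟩

theorem of_injective {D : Derivation ℤ A A} {E : Derivation ℤ B B} (hE : IsLND E) {f : A →+* B}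
    (hf : Function.Injective f) (h : Function.Semiconj f D E) : IsLND D :=
  fun a => (hE (f a)).imp fun n hn => ⟨hn.1, hf <| by
    rw [(h.iterate_right n).eq, hn.2, map_zero]⟩

theorem of_surjective {D : Derivation ℤ A A} {E : Derivation ℤ B B} (hD : IsLND D) {f : A →+* B}
    (hf : Function.Surjective f) (h : Function.Semiconj f D E) : IsLND E :=
  hf.forall.mpr fun a => (hD a).imp fun n hn => ⟨hn.1, by
    rw [← (h.iterate_right n).eq, hn.2, map_zero]⟩

end IsLND

/-- The extension of a derivation of `A` to `A[T]` that acts on coefficients and kills `T`. -/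
def polynomialDerivation (D : Derivation k A A) : Derivation k A[X] A[X] :=
  PolynomialModule.equivPolynomialSelf.toLinearMap.compDer D.mapCoeffs

theorem coeff_polynomialDerivation (D : Derivation k A A) (p : A[X]) (i : ℕ) :
    (polynomialDerivation D p).coeff i = D (p.coeff i) := rfl

theorem polynomialDerivation_C (D : Derivation k A A) (a : A) :
    polynomialDerivation D (Polynomial.C a) = Polynomial.C (D a) := by
  ext i
  simp [coeff_polynomialDerivation, Polynomial.coeff_C, apply_ite D]

theorem polynomialDerivation_X (D : Derivation k A A) :
    polynomialDerivation D Polynomial.X = 0 := by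
  ext i
  simp [coeff_polynomialDerivation, Polynomial.coeff_X, apply_ite D]

theorem coeff_iterate_polynomialDerivation (D : Derivation k A A) (n : ℕ) (p : A[X]) (i : ℕ) :
    ((polynomialDerivation D)^[n] p).coeff i = D^[n] (p.coeff i) :=
  Function.Semiconj.iterate_right (f := fun q : A[X] => q.coeff i)
    (fun q => coeff_polynomialDerivation D q i) n p

theorem isLND_polynomialDerivation {D : Derivation k A A} (hD : IsLND (D.restrictScalars ℤ)) :
    IsLND ((polynomialDerivation D).restrictScalars ℤ) := by
  intro p
  choose n _ hn using hD
  let N := p.support.sup (fun i => n (p.coeff i)) + 1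
  suffices h : (polynomialDerivation D)^[N] p = 0 from ⟨N, Nat.succ_pos _, h⟩
  ext i
  rw [coeff_iterate_polynomialDerivation, Polynomial.coeff_zero]
  by_cases hi : p.coeff i = 0
  · rw [hi, iterate_map_zero]
  · refine iterate_map_eq_zero_of_le (hn _) (Nat.le_succ_of_le ?_)
    exact Finset.le_sup (f := fun i => n (p.coeff i)) (Polynomial.mem_support_iff.mpr hi)

end LocallyNilpotent

section Descent

theorem exists_compDer_eq {k A M N : Type*} [CommRing k] [CommRing A] [Algebra k A]
    [AddCommGroup M] [Module A M] [Module k M] [IsScalarTower k A M]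
    [AddCommGroup N] [Module A N] [Module k N] [IsScalarTower k A N]
    {j : N →ₗ[A] M} (hj : Function.Injective j) (D : Derivation k A M)
    (hD : ∀ a, D a ∈ LinearMap.range j) : ∃ E : Derivation k A N, j.compDer E = D := by
  choose E hE using hD
  refine ⟨Derivation.mk' { toFun := E, map_add' := fun a b => hj ?_, map_smul' := fun c a => hj ?_ }
    fun a b => hj ?_, Derivation.ext hE⟩
  · simp [hE]
  · change j (E (c • a)) = j (c • E a)
    rw [hE, D.map_smul, LinearMap.map_smul_of_tower, hE]
  · simp [hE]

theorem exists_restrictScalars_eq {k A : Type*} [CommRing k] [CommRing A] [Algebra k A]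
    (D : Derivation ℤ A A) (hD : ∀ c : k, D (algebraMap k A c) = 0) :
    ∃ E : Derivation k A A, E.restrictScalars ℤ = D := by
  have hsmul : ∀ (c : k) (a : A), D (c • a) = c • D a := by simp [Algebra.smul_def, hD]
  exact ⟨.mk' { toFun := D, map_add' := map_add D, map_smul' := hsmul } D.leibniz, rfl⟩

theorem exists_pow_smul_derivation_mem {k A M : Type*} [CommRing k] [CommRing A] [Algebra k A]
    [Algebra.FiniteType k A] [AddCommGroup M] [Module A M] [Module k M] (N : Submodule A M) (t : A)
    (hN : ∀ x : M, ∃ n, t ^ n • x ∈ N) (D : Derivation k A M) :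
    ∃ n, ∀ a, t ^ n • D a ∈ N := by
  obtain ⟨s, hs⟩ := Algebra.FiniteType.out (R := k) (A := A)
  choose n hn using hN
  refine ⟨s.sup fun a => n (D a), fun a => ?_⟩
  induction hs ▸ Algebra.mem_top (x := a) using Algebra.adjoin_induction with
  | mem a ha =>
    obtain ⟨l, hl⟩ := Nat.exists_eq_add_of_le' (Finset.le_sup (f := fun a => n (D a)) ha)
    rw [hl, pow_add, mul_smul]
    exact N.smul_mem _ (hn _)
  | algebraMap c => simp
  | add a b _ _ ha hb => simpa only [map_add, smul_add] using N.add_mem ha hb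
  | mul a b _ _ ha hb =>
    rw [Derivation.leibniz, smul_add, smul_comm _ a, smul_comm _ b]
    exact N.add_mem (N.smul_mem a hb) (N.smul_mem b ha)

section

variable {A B : Type*} [CommRing A] [IsDomain A] [CommRing B] {q : A →+* B} {t : A}
  {D : Derivation ℤ A A}

theorem IsLND.exists_eq_smul_of_isRigid (hD : IsLND D) (hB : IsRigid B)
    (hq : Function.Surjective q) (hqt : ∀ a, q a = 0 ↔ t ∣ a) (ht : t ≠ 0) (hDt : D t = 0) :
    ∃ E : Derivation ℤ A A, IsLND E ∧ E t = 0 ∧ D = t • E := by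
  have hker : ∀ a, q.toIntAlgHom a = 0 → q.toIntAlgHom (D a) = 0 := by
    simp only [RingHom.toIntAlgHom_apply, hqt]
    rintro _ ⟨b, rfl⟩
    simp [hDt]
  have hsemi := Derivation.liftOfSurjective_apply (f := q.toIntAlgHom) hq hker
  have hzero := hB _ (hD.of_surjective hq fun a => (hsemi a).symm)
  have hdvd : ∀ a, t ∣ D a := fun a => by
    rw [← hqt, ← q.toIntAlgHom_apply, ← hsemi, hzero, Derivation.zero_apply]
  obtain ⟨E, rfl⟩ := exists_compDer_eq (j := LinearMap.mulLeft A t) (mul_right_injective₀ ht) D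
    fun a => (hdvd a).imp fun b hb => hb.symm
  have hEt : E t = 0 := (mul_eq_zero.mp hDt).resolve_left ht
  exact ⟨E, .of_smul hEt (IsLeftCancelMulZero.mul_left_cancel_of_ne_zero ht) hD, hEt, rfl⟩

theorem IsLND.pow_dvd_apply_of_isRigid (hD : IsLND D) (hB : IsRigid B)
    (hq : Function.Surjective q) (hqt : ∀ a, q a = 0 ↔ t ∣ a) (ht : t ≠ 0) (hDt : D t = 0)
    (n : ℕ) (a : A) : t ^ n ∣ D a := by
  induction n generalizing D with
  | zero => simp
  | succ n ih =>
    obtain ⟨E, hE, hEt, rfl⟩ := hD.exists_eq_smul_of_isRigid hB hq hqt ht hDt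
    rw [pow_succ', Derivation.smul_apply, smul_eq_mul]
    exact mul_dvd_mul_left t (ih hE hEt)

theorem IsLND.eq_zero_of_isRigid [WfDvdMonoid A] [Nontrivial B] (hD : IsLND D) (hB : IsRigid B)
    (hq : Function.Surjective q) (hqt : ∀ a, q a = 0 ↔ t ∣ a) (ht : t ≠ 0) (hDt : D t = 0) :
    D = 0 := by
  have htu : ¬IsUnit t := fun h =>
    not_isUnit_zero (M₀ := B) ((hqt t).mpr dvd_rfl ▸ h.map q)
  ext a
  by_contra ha
  exact (FiniteMultiplicity.of_not_isUnit htu ha).not_pow_dvd_of_multiplicity_lt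
    (Nat.lt_succ_self _) (hD.pow_dvd_apply_of_isRigid hB hq hqt ht hDt _ a)

end

section

variable {k A L B : Type*} [Field k] [CommRing A] [CommRing L] [CommRing B] [Algebra k A]
  [Algebra k L] {ρ : A →ₐ[k] L} {t : A}

theorem isDomain_of_injective_of_exists_pow_mul [IsDomain A] (hρ : Function.Injective ρ)
    (ht : IsLeftRegular (ρ t)) (hL : ∀ y, ∃ n a, ρ a = ρ t ^ n * y) : IsDomain L := by
  have := hρ.nontrivial
  suffices NoZeroDivisors L from NoZeroDivisors.to_isDomain L
  refine ⟨fun {x y} hxy => ?_⟩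
  obtain ⟨m, a, ha⟩ := hL x
  obtain ⟨n, b, hb⟩ := hL y
  have hab : a * b = 0 := (map_eq_zero_iff ρ hρ).mp <| by
    rw [map_mul, ha, hb, mul_mul_mul_comm, hxy, mul_zero]
  refine (mul_eq_zero.mp hab).imp ?_ ?_
  · rintro rfl
    rwa [map_zero, eq_comm, (ht.pow m).mul_left_eq_zero_iff] at ha
  · rintro rfl
    rwa [map_zero, eq_comm, (ht.pow n).mul_left_eq_zero_iff] at hb

theorem IsLND.eq_zero_of_isRigid_of_injective [IsDomain L] [Algebra.FiniteType k A]
    [Nontrivial B] (hρ : Function.Injective ρ) (ht : t ≠ 0)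
    (hL : ∀ y, ∃ n a, ρ a = ρ t ^ n * y) {q : A →+* B} (hq : Function.Surjective q)
    (hqt : ∀ a, q a = 0 ↔ t ∣ a) (hB : IsRigid B) {D : Derivation k L L}
    (hD : IsLND (D.restrictScalars ℤ)) (hDt : D (ρ t) = 0) : D = 0 := by
  let := ρ.toAlgebra
  have := hρ.isDomain ρ
  have := Algebra.FiniteType.isNoetherianRing k A
  have htL : ρ t ≠ 0 := (map_ne_zero_iff ρ hρ).mpr ht
  obtain ⟨n, hn⟩ := exists_pow_smul_derivation_mem (LinearMap.range (Algebra.linearMap A L)) t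
    (fun y => (hL y).imp fun n ⟨a, ha⟩ => ⟨a, by rw [Algebra.smul_def, map_pow]; exact ha⟩)
    (D.compAlgebraMap A)
  obtain ⟨E, hE⟩ := exists_compDer_eq hρ (t ^ n • D.compAlgebraMap A) hn
  have hED : Function.Semiconj ρ E (ρ t ^ n • D) := fun a =>
    (Derivation.congr_fun hE a).trans (by rw [← map_pow]; rfl)
  have hElnd : IsLND (E.restrictScalars ℤ) :=
    .of_injective (f := (ρ : A →+* L)) (hD.smul (by simp [Derivation.leibniz_pow, hDt])) hρ hED
  have hE0 : E.restrictScalars ℤ = 0 :=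
    hElnd.eq_zero_of_isRigid hB hq hqt ht (hρ (by simp [hED.eq, hDt]))
  have hDA (a : A) : D (ρ a) = 0 := by
    have := hED.eq a
    rw [← Derivation.restrictScalars_apply ℤ, hE0] at this
    simpa [htL] using this
  ext y
  obtain ⟨m, a, ha⟩ := hL y
  have := hDA a
  rw [ha, Derivation.leibniz, Derivation.leibniz_pow, hDt] at this
  simpa [htL] using this

end

end Descent

section HomogenizedFiber

theorem aeval_pow_mul_of_isWeightedHomogeneous {σ k S : Type*} [CommSemiring k] [CommSemiring S]
    [Algebra k S] {w : σ → ℕ} {f : MvPolynomial σ k} {m : ℕ} (hf : f.IsWeightedHomogeneous w m)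
    (u : S) (φ : MvPolynomial σ k →ₐ[k] S) :
    aeval (fun i => u ^ w i * φ (X i)) f = u ^ m * φ f := by
  conv_rhs => rw [aeval_unique φ]
  simp only [aeval_def, eval₂_eq, Finset.mul_sum]
  refine Finset.sum_congr rfl fun d hd => ?_
  have hdm : ∑ i ∈ d.support, w i * d i = m := by
    simpa [Finsupp.weight_apply, Finsupp.sum, mul_comm] using hf (mem_support_iff.mp hd)
  simp only [Function.comp_apply, mul_pow, Finset.prod_mul_distrib, ← pow_mul,
    Finset.prod_pow_eq_pow_sum, hdm]
  ring

theorem prime_X_pow_sub_C {R : Type*} [CommRing R] [IsDomain R] [UniqueFactorizationMonoid R]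
    {a : R} (ha : Prime a) {m : ℕ} (hm : m ≠ 0) :
    Prime (Polynomial.X ^ m - Polynomial.C a : R[X]) := by
  have hmonic := Polynomial.monic_X_pow_sub_C a hm
  have hdeg := Polynomial.natDegree_X_pow_sub_C (n := m) (r := a)
  have hprime : (Ideal.span {a}).IsPrime := (Ideal.span_singleton_prime ha.ne_zero).mpr ha
  refine (Polynomial.IsEisensteinAt.irreducible (𝓟 := Ideal.span {a}) ?_ hprime
    hmonic.isPrimitive (by rw [hdeg]; exact Nat.pos_of_ne_zero hm)).prime
  refine hmonic.isEisensteinAt_of_mem_of_notMem hprime.ne_top (fun {i} hi => ?_) ?_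
  · rw [hdeg] at hi
    rw [Polynomial.coeff_sub, Polynomial.coeff_X_pow, if_neg hi.ne, zero_sub, Ideal.neg_mem_iff,
      Polynomial.coeff_C]
    split_ifs
    · exact Ideal.mem_span_singleton_self a
    · exact Ideal.zero_mem _
  · rw [Ideal.span_singleton_pow, Ideal.mem_span_singleton]
    simpa [hm.symm, sq] using fun h => ha.not_isUnit (ha.squarefree a h)

/-- The coordinate ring of the fibre `f = c`. -/
abbrev Fiber {σ k : Type*} [CommRing k] (f : MvPolynomial σ k) (c : k) : Type _ :=
  MvPolynomial σ k ⧸ Ideal.span {f - C c}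

/-- The polynomial `f - c * T ^ m`, where `T` is the variable of the outer polynomial ring: the
homogenization of `f - c` when `f` is weighted homogeneous of degree `m` and `T` has weight one. -/
def fiberHomogenization {σ k : Type*} [CommRing k] (f : MvPolynomial σ k) (c : k) (m : ℕ) :
    (MvPolynomial σ k)[X] :=
  Polynomial.C f - Polynomial.C (C c) * Polynomial.X ^ m

theorem prime_fiberHomogenization {σ k : Type*} [Field k] {f : MvPolynomial σ k} {m : ℕ}
    (hf : Prime f) (hm : m ≠ 0) (c : k) : Prime (fiberHomogenization f c m) := by
  obtain rfl | hc := eq_or_ne c 0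
  · simpa [fiberHomogenization] using Polynomial.prime_C_iff.mpr hf
  · have hu {b : k} (hb : b ≠ 0) : IsUnit (C b : MvPolynomial σ k) := hb.isUnit.map C
    have hprime : Prime (C c⁻¹ * f) :=
      (associated_unit_mul_right f _ (hu (inv_ne_zero hc))).prime hf
    have hinv : Polynomial.C (C c : MvPolynomial σ k) * Polynomial.C (C c⁻¹) = 1 := by
      rw [← map_mul, ← map_mul, mul_inv_cancel₀ hc, map_one, map_one]
    have hfactor : fiberHomogenization f c m =
        Polynomial.C (C (-c)) * (Polynomial.X ^ m - Polynomial.C (C c⁻¹ * f)) := by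
      simp only [fiberHomogenization, map_neg, map_mul]
      linear_combination (-Polynomial.C f) * hinv
    rw [hfactor]
    exact (associated_unit_mul_right _ _ ((hu (neg_ne_zero.mpr hc)).map Polynomial.C)).prime
      (prime_X_pow_sub_C hprime hm)

theorem eval₂_fiberHomogenization {σ k S : Type*} [CommRing k] [CommRing S]
    (i : MvPolynomial σ k →+* S) (u : S) (f : MvPolynomial σ k) (c : k) (m : ℕ) :
    (fiberHomogenization f c m).eval₂ i u = i f - i (C c) * u ^ m := by
  simp [fiberHomogenization, Polynomial.eval₂_mul]

/-- The coordinate ring of the hypersurface `f = c * T ^ m`. -/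
abbrev HomogenizedFiber {σ k : Type*} [CommRing k] (f : MvPolynomial σ k) (c : k) (m : ℕ) :
    Type _ :=
  AdjoinRoot (fiberHomogenization f c m)

namespace HomogenizedFiber

section CommRing

variable {σ k S : Type*} [CommRing k] [CommRing S] [Algebra k S] {w : σ → ℕ}
  {f : MvPolynomial σ k} {c : k} {m : ℕ}

variable (f c m) in
theorem of_eq_mul_root_pow :
    AdjoinRoot.of (fiberHomogenization f c m) f =
      algebraMap k (HomogenizedFiber f c m) c * AdjoinRoot.root _ ^ m :=
  sub_eq_zero.mp <|
    (eval₂_fiberHomogenization ..).symm.trans (AdjoinRoot.eval₂_root (fiberHomogenization f c m))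

/-- The map of varieties `(x, t) ↦ (t ^ w • x, t)` from the cylinder over `f = c` to the
hypersurface `f = c * T ^ m`, which is an isomorphism over `T ≠ 0`. -/
def toCylinder (hf : f.IsWeightedHomogeneous w m) (c : k) :
    HomogenizedFiber f c m →ₐ[k] (Fiber f c)[X] :=
  let φ := (Polynomial.CAlgHom (R := k)).comp (Ideal.Quotient.mkₐ k (Ideal.span {f - C c}))
  AdjoinRoot.liftAlgHom (fiberHomogenization f c m)
    (aeval fun i => Polynomial.X ^ w i * φ (X i)) Polynomial.X <| by
    have h : φ f = φ (C c) :=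
      congrArg Polynomial.C (Ideal.Quotient.eq.mpr (Ideal.mem_span_singleton_self _))
    rw [eval₂_fiberHomogenization, sub_eq_zero]
    change aeval _ f = aeval _ (C c) * Polynomial.X ^ m
    rw [aeval_pow_mul_of_isWeightedHomogeneous hf, h, aeval_C, Polynomial.X_pow_mul]
    rfl

theorem toCylinder_root (hf : f.IsWeightedHomogeneous w m) (c : k) :
    toCylinder hf c (AdjoinRoot.root _) = Polynomial.X :=
  AdjoinRoot.liftAlgHom_root ..

theorem toCylinder_of_X (hf : f.IsWeightedHomogeneous w m) (c : k) (i : σ) :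
    toCylinder hf c (AdjoinRoot.of _ (X i)) =
      Polynomial.X ^ w i * Polynomial.C (Ideal.Quotient.mk _ (X i)) :=
  (AdjoinRoot.liftAlgHom_of ..).trans (aeval_X ..)

theorem exists_comp_toCylinder_eq (hf : f.IsWeightedHomogeneous w m)
    (φ : HomogenizedFiber f c m →ₐ[k] S) (hφ : IsUnit (φ (AdjoinRoot.root _))) :
    ∃ ψ : (Fiber f c)[X] →ₐ[k] S, ψ.comp (toCylinder hf c) = φ := by
  obtain ⟨u, hu⟩ := hφ
  let φ' : MvPolynomial σ k →ₐ[k] S := φ.comp (AdjoinRoot.ofAlgHom k _)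
  let χ : MvPolynomial σ k →ₐ[k] S := aeval fun i => ↑u⁻¹ ^ w i * φ' (X i)
  have hχ : χ (f - C c) = 0 := by
    have hφ' : φ' f = algebraMap k S c * u ^ m := by
      change φ (AdjoinRoot.of _ f) = _
      rw [of_eq_mul_root_pow, map_mul, map_pow, φ.commutes, hu]
    rw [map_sub, aeval_pow_mul_of_isWeightedHomogeneous hf, hφ', aeval_C, mul_left_comm, ← mul_pow,
      u.inv_mul, one_pow, mul_one, sub_self]
  let χ' : Fiber f c →ₐ[k] S := Ideal.Quotient.liftₐ _ χ fun a ha => by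
    obtain ⟨b, rfl⟩ := Ideal.mem_span_singleton.mp ha
    rw [map_mul, hχ, zero_mul]
  let ψ : (Fiber f c)[X] →ₐ[k] S := Polynomial.eval₂AlgHom χ' u fun _ => .all _ _
  have hψX : ψ Polynomial.X = u := Polynomial.eval₂_X ..
  have hψC (i : σ) : ψ (Polynomial.C (Ideal.Quotient.mk _ (X i))) = ↑u⁻¹ ^ w i * φ' (X i) :=
    (Polynomial.eval₂_C ..).trans (aeval_X ..)
  refine ⟨ψ, AdjoinRoot.algHom_ext' (MvPolynomial.algHom_ext fun i => ?_) ?_⟩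
  · change ψ (toCylinder hf c (AdjoinRoot.of _ (X i))) = φ' (X i)
    rw [toCylinder_of_X, map_mul, map_pow, hψX, hψC, ← mul_assoc, ← mul_pow, u.mul_inv, one_pow,
      one_mul]
  · rw [AlgHom.comp_apply, toCylinder_root, hψX, hu]

theorem exists_toCylinder_eq_X_pow_mul_C (hf : f.IsWeightedHomogeneous w m) (c : k)
    (b : Fiber f c) : ∃ n a, toCylinder hf c a = Polynomial.X ^ n * Polynomial.C b := by
  obtain ⟨p, rfl⟩ := Ideal.Quotient.mk_surjective b
  induction p using MvPolynomial.induction_on with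
  | C r => exact ⟨0, algebraMap k _ r, by rw [AlgHom.commutes, pow_zero, one_mul]; rfl⟩
  | add p q hp hq =>
    obtain ⟨n, a, ha⟩ := hp
    obtain ⟨l, b, hb⟩ := hq
    refine ⟨n + l, AdjoinRoot.root _ ^ l * a + AdjoinRoot.root _ ^ n * b, ?_⟩
    simp only [map_add, map_mul, map_pow, toCylinder_root, ha, hb]
    ring
  | mul_X p i hp =>
    obtain ⟨n, a, ha⟩ := hp
    refine ⟨w i + n, AdjoinRoot.of _ (X i) * a, ?_⟩
    simp only [map_mul, toCylinder_of_X, ha]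
    ring

theorem exists_toCylinder_eq_root_pow_mul (hf : f.IsWeightedHomogeneous w m) (c : k)
    (y : (Fiber f c)[X]) :
    ∃ n a, toCylinder hf c a = toCylinder hf c (AdjoinRoot.root _) ^ n * y := by
  rw [toCylinder_root]
  induction y using Polynomial.induction_on' with
  | monomial l b =>
    obtain ⟨n, a, ha⟩ := exists_toCylinder_eq_X_pow_mul_C hf c b
    refine ⟨n, AdjoinRoot.root _ ^ l * a, ?_⟩
    rw [map_mul, map_pow, toCylinder_root, ha, ← Polynomial.C_mul_X_pow_eq_monomial]
    ring
  | add p q hp hq =>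
    obtain ⟨n, a, ha⟩ := hp
    obtain ⟨l, b, hb⟩ := hq
    refine ⟨n + l, AdjoinRoot.root _ ^ l * a + AdjoinRoot.root _ ^ n * b, ?_⟩
    simp only [map_add, map_mul, map_pow, toCylinder_root, ha, hb]
    ring

/-- Restriction to the hyperplane `T = 0`. -/
def toSpecialFiber (f : MvPolynomial σ k) (c : k) (hm : m ≠ 0) :
    HomogenizedFiber f c m →ₐ[k] MvPolynomial σ k ⧸ Ideal.span {f} :=
  AdjoinRoot.liftAlgHom _ (Ideal.Quotient.mkₐ k (Ideal.span {f})) 0 <| by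
    rw [eval₂_fiberHomogenization, zero_pow hm, mul_zero, sub_zero]
    exact Ideal.Quotient.mk_singleton_self f

theorem toSpecialFiber_of (c : k) (hm : m ≠ 0) (p : MvPolynomial σ k) :
    toSpecialFiber f c hm (AdjoinRoot.of _ p) = Ideal.Quotient.mk _ p :=
  AdjoinRoot.liftAlgHom_of ..

theorem toSpecialFiber_root (f : MvPolynomial σ k) (c : k) (hm : m ≠ 0) :
    toSpecialFiber f c hm (AdjoinRoot.root _) = 0 :=
  AdjoinRoot.liftAlgHom_root ..

theorem toSpecialFiber_surjective (f : MvPolynomial σ k) (c : k) (hm : m ≠ 0) :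
    Function.Surjective (toSpecialFiber f c hm) :=
  Ideal.Quotient.mk_surjective.forall.mpr fun p => ⟨_, toSpecialFiber_of c hm p⟩

theorem exists_eq_of_add_root_mul (a : HomogenizedFiber f c m) :
    ∃ p b, a = AdjoinRoot.of _ p + AdjoinRoot.root _ * b := by
  induction a using AdjoinRoot.induction_on with
  | ih P =>
    refine ⟨P.coeff 0, AdjoinRoot.mk _ P.divX, ?_⟩
    conv_lhs => rw [← P.X_mul_divX_add]
    rw [map_add, map_mul, AdjoinRoot.mk_X, AdjoinRoot.mk_C, add_comm]

theorem toSpecialFiber_eq_zero_iff (hm : m ≠ 0) (a : HomogenizedFiber f c m) :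
    toSpecialFiber f c hm a = 0 ↔ AdjoinRoot.root _ ∣ a := by
  constructor
  · intro h
    obtain ⟨p, b, rfl⟩ := exists_eq_of_add_root_mul a
    rw [map_add, map_mul, toSpecialFiber_root, zero_mul, add_zero, toSpecialFiber_of,
      Ideal.Quotient.eq_zero_iff_mem, Ideal.mem_span_singleton] at h
    obtain ⟨q, rfl⟩ := h
    rw [map_mul, of_eq_mul_root_pow]
    exact dvd_add (((dvd_pow_self _ hm).mul_left _).mul_right _) (dvd_mul_right _ _)
  · rintro ⟨b, rfl⟩
    rw [map_mul, toSpecialFiber_root, zero_mul]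

end CommRing

section Field

variable {σ k : Type*} [Field k] {w : σ → ℕ} {f : MvPolynomial σ k} {m : ℕ}

theorem isDomain (hf : Prime f) (hm : m ≠ 0) (c : k) : IsDomain (HomogenizedFiber f c m) :=
  AdjoinRoot.isDomain_of_prime (prime_fiberHomogenization hf hm c)

theorem root_ne_zero (hf : Prime f) (hm : m ≠ 0) (c : k) :
    AdjoinRoot.root (fiberHomogenization f c m) ≠ 0 := by
  have hF := prime_fiberHomogenization hf hm c
  rw [← AdjoinRoot.mk_X, Ne, AdjoinRoot.mk_eq_zero,
    hF.dvd_prime_iff_associated Polynomial.prime_X]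
  intro h
  have := Polynomial.X_dvd_iff.mp h.symm.dvd
  exact hf.ne_zero (by simpa [fiberHomogenization, hm.symm] using this)

theorem toCylinder_injective (hf : Prime f) (hfw : f.IsWeightedHomogeneous w m) (hm : m ≠ 0)
    (c : k) : Function.Injective (toCylinder hfw c) := by
  have := isDomain hf hm c
  let φ := IsScalarTower.toAlgHom k (HomogenizedFiber f c m)
    (FractionRing (HomogenizedFiber f c m))
  have hφ : Function.Injective φ := IsFractionRing.injective _ _
  obtain ⟨ψ, hψ⟩ := exists_comp_toCylinder_eq hfw φ
    ((map_ne_zero_iff φ hφ).mpr (root_ne_zero hf hm c)).isUnit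
  exact .of_comp (f := ψ) (by rwa [← AlgHom.coe_comp, hψ])

end Field

end HomogenizedFiber
end HomogenizedFiber

section Fiber

variable {σ k : Type*} [Field k] {w : σ → ℕ} {f : MvPolynomial σ k} {m : ℕ}

theorem isDomain_fiber (hf : Prime f) (hfw : f.IsWeightedHomogeneous w m) (hm : m ≠ 0) (c : k) :
    IsDomain (Fiber f c) := by
  have := HomogenizedFiber.isDomain hf hm c
  have hX : IsLeftRegular (HomogenizedFiber.toCylinder hfw c (AdjoinRoot.root _)) := by
    rw [HomogenizedFiber.toCylinder_root]
    exact Polynomial.monic_X.isRegular.left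
  have : IsDomain (Fiber f c)[X] :=
    isDomain_of_injective_of_exists_pow_mul (L := (Fiber f c)[X])
      (HomogenizedFiber.toCylinder_injective hf hfw hm c) hX
      (HomogenizedFiber.exists_toCylinder_eq_root_pow_mul hfw c)
  exact Polynomial.C_injective.isDomain Polynomial.C

theorem isRigid_fiber [Finite σ] [PerfectField k] (hf : Prime f)
    (hfw : f.IsWeightedHomogeneous w m) (hm : m ≠ 0)
    (hrigid : IsRigid (MvPolynomial σ k ⧸ Ideal.span {f})) (c : k) : IsRigid (Fiber f c) := by
  intro D hD
  have := isDomain_fiber hf hfw hm c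
  have := Ideal.Quotient.nontrivial_iff.mpr
    ((Ideal.span_singleton_prime hf.ne_zero).mpr hf).ne_top
  obtain ⟨D, rfl⟩ := exists_restrictScalars_eq D (hD.apply_algebraMap_eq_zero (K := k))
  have hDX : polynomialDerivation D Polynomial.X = 0 := polynomialDerivation_X D
  rw [← HomogenizedFiber.toCylinder_root hfw] at hDX
  have hzero : polynomialDerivation D = 0 :=
    (isLND_polynomialDerivation hD).eq_zero_of_isRigid_of_injective
      (HomogenizedFiber.toCylinder_injective hf hfw hm c)
      (HomogenizedFiber.root_ne_zero hf hm c)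
      (HomogenizedFiber.exists_toCylinder_eq_root_pow_mul hfw c)
      (q := HomogenizedFiber.toSpecialFiber f c hm)
      (HomogenizedFiber.toSpecialFiber_surjective f c hm)
      (HomogenizedFiber.toSpecialFiber_eq_zero_iff hm) hrigid hDX
  ext a
  apply Polynomial.C_injective
  rw [Derivation.restrictScalars_apply, ← polynomialDerivation_C, hzero, Derivation.zero_apply,
    Derivation.zero_apply, map_zero]

end Fiber

theorem fibers_of_homogeneous_polynomial_general {σ k : Type*} [Finite σ] [Field k]
    [PerfectField k] {w : σ → ℕ} {f : MvPolynomial σ k} {m : ℕ} (hf : Prime f)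
    (hfw : f.IsWeightedHomogeneous w m) (hm : m ≠ 0) :
    (∀ c : k, IsDomain (MvPolynomial σ k ⧸ Ideal.span {f - C c})) ∧
    (IsRigid (MvPolynomial σ k ⧸ Ideal.span {f}) →
      ∀ c : k, IsRigid (MvPolynomial σ k ⧸ Ideal.span {f - C c})) :=
  ⟨isDomain_fiber hf hfw hm, isRigid_fiber hf hfw hm⟩

/-- Let k be a field of characteristic 0 and R = k[X₁,…,Xₙ] (n ≥ 2) equipped with an
ℕ-grading in which each variable is homogeneous (equivalently, the grading given by a
weight function w : Fin n → ℕ) such that X₁ (the variable of index 0) has positive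
degree.  Let f be a homogeneous prime element of R with f ∉ R₀[X₁].  Then:
(a) R/(f − c)R is an integral domain for every c ∈ k;
(b) if R/fR is rigid then R/(f − c)R is rigid for every c ∈ k. -/
theorem fibers_of_homogeneous_polynomial
    {k : Type*} [Field k] [CharZero k]
    (n : ℕ) [NeZero n] (hn : 2 ≤ n)
    (w : Fin n → ℕ) (hw : 0 < w 0)
    (f : MvPolynomial (Fin n) k) (hf : Prime f)
    (hfhom : ∃ m : ℕ, f.IsWeightedHomogeneous w m)
    (hfnot : f ∉ Subring.closure
      ((weightedHomogeneousSubmodule k w 0 : Set (MvPolynomial (Fin n) k)) ∪ {X 0})) :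
    (∀ c : k, IsDomain
      (MvPolynomial (Fin n) k ⧸ Ideal.span {f - C c})) ∧
    ((∀ D : Derivation ℤ (MvPolynomial (Fin n) k ⧸ Ideal.span {f})
        (MvPolynomial (Fin n) k ⧸ Ideal.span {f}), IsLND D → D = 0) →
      ∀ c : k, ∀ D : Derivation ℤ (MvPolynomial (Fin n) k ⧸ Ideal.span {f - C c})
        (MvPolynomial (Fin n) k ⧸ Ideal.span {f - C c}), IsLND D → D = 0) := by
  obtain ⟨m, hm⟩ := hfhom
  have hm0 : m ≠ 0 := by
    rintro rfl
    exact hfnot (Subring.subset_closure (Or.inl hm))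
  exact fibers_of_homogeneous_polynomial_general hf hm hm0
end
end
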